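/- arXiv:2404.05554 — 2 statements merged into one kernel-verified Lean document; each statement's English description precedes it below -/
import Mathlib

section
/- Fix T > 0 and let K ∈ L¹([0,T]; ℝ^{d×d}) be completely monotone with K(t₀) ≻ 0 for some t₀ > 0, with resolvent of the first kind L. Then for each η ∈ [0,1], the integral transformation Z defined by Z_t(x) = ∫_{[0,t]} L(ds)(x_{t−s} − x₀) maps C^η([0,T]; ℝ^d) into C₀^η([0,T]; ℝ^d) (the η-Hölder continuous paths vanishing at 0) and is a continuous linear operator between these spaces. -/
open MeasureTheory Set Filter Matrix
open scoped ENNReal NNReal Topology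

noncomputable section

/-- A matrix-valued kernel is completely monotone: it is `C^∞` on `(0,∞)` and
`(-1)^n K^{(n)}(t)` is positive semidefinite (as a quadratic form) for all `t > 0`. -/
def CompletelyMonotoneMat {d : ℕ} (K : ℝ → Matrix (Fin d) (Fin d) ℝ) : Prop :=
  (∀ i j, ContDiffOn ℝ (⊤ : ℕ∞) (fun t => K t i j) (Set.Ioi 0)) ∧
  ∀ (n : ℕ) (t : ℝ), 0 < t → ∀ v : Fin d → ℝ,
    0 ≤ (-1 : ℝ) ^ n *
      (v ⬝ᵥ (Matrix.of fun i j => iteratedDerivWithin n (fun s => K s i j) (Set.Ioi 0) t).mulVec v)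

/-- The resolvent of the first kind `L(ds) = A δ₀(ds) + L₀(s) ds` of `K`:
a measure of locally bounded variation with `K ∗ L = L ∗ K = Id` on `(0,∞)`. -/
def IsResolventFirstKind {d : ℕ} (K : ℝ → Matrix (Fin d) (Fin d) ℝ)
    (A : Matrix (Fin d) (Fin d) ℝ) (L₀ : ℝ → Matrix (Fin d) (Fin d) ℝ) : Prop :=
  (∀ T > (0:ℝ), ∀ i j, IntervalIntegrable (fun t => L₀ t i j) volume 0 T) ∧
  (∀ t > (0:ℝ), ∀ i j,
    (K t * A) i j + (∫ s in (0:ℝ)..t, (K (t - s) * L₀ s) i j) = (1 : Matrix (Fin d) (Fin d) ℝ) i j) ∧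
  (∀ t > (0:ℝ), ∀ i j,
    (A * K t) i j + (∫ s in (0:ℝ)..t, (L₀ s * K (t - s)) i j) = (1 : Matrix (Fin d) (Fin d) ℝ) i j)

/-- The transformation `Z_t(x) = ∫_{[0,t]} L(ds)(x_{t-s} - x₀)`, where
`L(ds) = A δ₀(ds) + L₀(s) ds`. -/
noncomputable def zTransform {d : ℕ} (A : Matrix (Fin d) (Fin d) ℝ)
    (L₀ : ℝ → Matrix (Fin d) (Fin d) ℝ) (x : ℝ → Fin d → ℝ) (t : ℝ) : Fin d → ℝ :=
  A.mulVec (x t - x 0) + ∫ s in (0:ℝ)..t, (L₀ s).mulVec (x (t - s) - x 0)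

/-- Membership in `C^η([0,T]; ℝ^d)` (for `η = 0` this is the space of continuous paths). -/
def HolderOnIcc {d : ℕ} (η T : ℝ) (x : ℝ → Fin d → ℝ) : Prop :=
  ContinuousOn x (Set.Icc 0 T) ∧
  ∃ C : ℝ, ∀ s ∈ Set.Icc (0:ℝ) T, ∀ t ∈ Set.Icc (0:ℝ) T, ‖x t - x s‖ ≤ C * |t - s| ^ η

/-- `x` has `C^η([0,T])`-norm (sup norm plus Hölder seminorm) bounded by `C`. -/
def HolderNormBound {d : ℕ} (η T : ℝ) (x : ℝ → Fin d → ℝ) (C : ℝ) : Prop :=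
  (∀ t ∈ Set.Icc (0:ℝ) T, ‖x t‖ ≤ C) ∧
  ∀ s ∈ Set.Icc (0:ℝ) T, ∀ t ∈ Set.Icc (0:ℝ) T, ‖x t - x s‖ ≤ C * |t - s| ^ η

/-!
On `[0, T]` the transform is convolution of the finite matrix-valued measure
`L = A δ₀ + L₀(s) ds` with the increment `x - x 0`, extended to `ℝ` by `0` to the left of `0` and by
its final value to the right of `T`. The extension has the same modulus of continuity as `x`, and
convolution with `L` commutes with translations, so it multiplies sup norms and moduli of continuity
by at most the total variation of `L` on `[0, T]`.
-/

section Convolution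

open scoped Convolution

variable {𝕜 G E E' F : Type*} [NontriviallyNormedField 𝕜]
  [NormedAddCommGroup E] [NormedSpace 𝕜 E] [NormedAddCommGroup E'] [NormedSpace 𝕜 E']
  [NormedAddCommGroup F] [NormedSpace 𝕜 F] [MeasurableSpace G]
  (B : E →L[𝕜] E' →L[𝕜] F) {μ : Measure G} (a : E) {f : G → E} {g g' : G → E'} {C : ℝ}

/-- The total variation of the vector measure `a δ₀ + f dμ` times the norm of the pairing `B`. It
bounds the operator norm of convolution with that measure on bounded functions. -/
def convolutionWithAtomBound (B : E →L[𝕜] E' →L[𝕜] F) (μ : Measure G) (a : E) (f : G → E) : ℝ :=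
  ‖B‖ * (‖a‖ + ∫ u, ‖f u‖ ∂μ)

lemma convolutionWithAtomBound_nonneg : 0 ≤ convolutionWithAtomBound B μ a f := by
  unfold convolutionWithAtomBound
  positivity

variable [NormedSpace ℝ F]

/-- The convolution of `g` with the vector measure `a δ₀ + f dμ`, with respect to the pairing
`B`. -/
def convolutionWithAtom [Sub G] (B : E →L[𝕜] E' →L[𝕜] F) (μ : Measure G) (a : E) (f : G → E)
    (g : G → E') (t : G) : F :=
  B a (g t) + (f ⋆[B, μ] g) t

lemma norm_apply_add_integral_le (hf : Integrable f μ) {v : E'} {w : G → E'} (hv : ‖v‖ ≤ C)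
    (hw : ∀ u, ‖w u‖ ≤ C) :
    ‖B a v + ∫ u, B (f u) (w u) ∂μ‖ ≤ convolutionWithAtomBound B μ a f * C := by
  have norm_integral_le : ‖∫ u, B (f u) (w u) ∂μ‖ ≤ ∫ u, ‖B‖ * ‖f u‖ * C ∂μ :=
    norm_integral_le_of_norm_le ((hf.norm.const_mul _).mul_const _)
      (.of_forall fun u => B.le_of_opNorm₂_le_of_le le_rfl le_rfl (hw u))
  calc ‖B a v + ∫ u, B (f u) (w u) ∂μ‖
      ≤ ‖B‖ * ‖a‖ * C + ∫ u, ‖B‖ * ‖f u‖ * C ∂μ :=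
        norm_add_le_of_le (B.le_of_opNorm₂_le_of_le le_rfl le_rfl hv) norm_integral_le
    _ = convolutionWithAtomBound B μ a f * C := by
        rw [integral_mul_const, integral_const_mul, convolutionWithAtomBound]
        ring

lemma norm_convolutionWithAtom_le [Sub G] (hf : Integrable f μ) (hg : ∀ u, ‖g u‖ ≤ C) (t : G) :
    ‖convolutionWithAtom B μ a f g t‖ ≤ convolutionWithAtomBound B μ a f * C :=
  norm_apply_add_integral_le B a hf (hg t) fun u => hg (t - u)

variable [AddGroup G]

variable {B} in
lemma norm_convolutionWithAtom_sub_le (hf : Integrable f μ) {s t : G}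
    (hs : ConvolutionExistsAt f g s B μ) (ht : ConvolutionExistsAt f g t B μ)
    (hg : ∀ u, ‖g (t - u) - g (s - u)‖ ≤ C) :
    ‖convolutionWithAtom B μ a f g t - convolutionWithAtom B μ a f g s‖ ≤
      convolutionWithAtomBound B μ a f * C := by
  have sub_eq : convolutionWithAtom B μ a f g t - convolutionWithAtom B μ a f g s =
      B a (g t - g s) + ∫ u, B (f u) (g (t - u) - g (s - u)) ∂μ := by
    simp only [convolutionWithAtom, convolution_def, map_sub,
      integral_sub ht.integrable hs.integrable, add_sub_add_comm]
  rw [sub_eq]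
  exact norm_apply_add_integral_le B a hf (by simpa only [sub_zero] using hg 0) hg

variable {B} in
lemma convolutionWithAtom_add {t : G} (hg : ConvolutionExistsAt f g t B μ)
    (hg' : ConvolutionExistsAt f g' t B μ) :
    convolutionWithAtom B μ a f (g + g') t =
      convolutionWithAtom B μ a f g t + convolutionWithAtom B μ a f g' t := by
  simp only [convolutionWithAtom, hg.distrib_add hg', Pi.add_apply, map_add, add_add_add_comm]

lemma continuous_convolutionWithAtom [TopologicalSpace G] [IsTopologicalAddGroup G]
    [BorelSpace G] [SecondCountableTopology G] (hf : Integrable f μ)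
    (hbg : BddAbove (range fun u => ‖g u‖)) (hg : Continuous g) :
    Continuous (convolutionWithAtom B μ a f g) :=
  ((B a).continuous.comp hg).add (hbg.continuous_convolution_right_of_integrable B hf hg)

end Convolution

section CenteredExtension

variable {E : Type*} {T : ℝ} {hT : 0 ≤ T} {x : ℝ → E}

/-- The increment `x - x 0` on `[0, T]`, extended to `ℝ` by freezing the path outside `[0, T]`. -/
def centeredExtension [Sub E] (hT : 0 ≤ T) (x : ℝ → E) (r : ℝ) : E :=
  x (projIcc 0 T hT r) - x 0

lemma centeredExtension_of_mem [Sub E] {r : ℝ} (hr : r ∈ Icc 0 T) :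
    centeredExtension hT x r = x r - x 0 := by
  rw [centeredExtension, projIcc_of_mem hT hr]

lemma centeredExtension_of_nonpos [AddGroup E] {r : ℝ} (hr : r ≤ 0) :
    centeredExtension hT x r = 0 := by
  rw [centeredExtension, projIcc_of_le_left hT hr, sub_self]

lemma centeredExtension_add [AddCommGroup E] (x y : ℝ → E) :
    centeredExtension hT (x + y) = centeredExtension hT x + centeredExtension hT y :=
  funext fun _ => add_sub_add_comm _ _ _ _

variable [SeminormedAddCommGroup E]

lemma continuous_centeredExtension (hx : ContinuousOn x (Icc 0 T)) :
    Continuous (centeredExtension hT x) :=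
  (hx.comp_continuous (continuous_subtype_val.comp continuous_projIcc)
    fun r => (projIcc 0 T hT r).2).sub continuous_const

lemma norm_centeredExtension_le {C : ℝ} (hx : ∀ t ∈ Icc 0 T, ‖x t - x 0‖ ≤ C) (r : ℝ) :
    ‖centeredExtension hT x r‖ ≤ C :=
  hx _ (projIcc 0 T hT r).2

lemma bddAbove_norm_centeredExtension (hx : ContinuousOn x (Icc 0 T)) :
    BddAbove (range fun r => ‖centeredExtension hT x r‖) := by
  obtain ⟨C, hC⟩ := isCompact_Icc.exists_bound_of_continuousOn (hx.sub continuousOn_const)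
  exact ⟨C, forall_mem_range.2 (norm_centeredExtension_le hC)⟩

lemma norm_centeredExtension_sub_le {C η : ℝ} (hC : 0 ≤ C) (hη : 0 ≤ η)
    (hx : ∀ s ∈ Icc 0 T, ∀ t ∈ Icc 0 T, ‖x t - x s‖ ≤ C * |t - s| ^ η) (s t : ℝ) :
    ‖centeredExtension hT x t - centeredExtension hT x s‖ ≤ C * |t - s| ^ η := by
  rw [centeredExtension, centeredExtension, sub_sub_sub_cancel_right]
  calc ‖x (projIcc 0 T hT t) - x (projIcc 0 T hT s)‖
      ≤ C * |(projIcc 0 T hT t - projIcc 0 T hT s : ℝ)| ^ η :=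
        hx _ (projIcc 0 T hT s).2 _ (projIcc 0 T hT t).2
    _ ≤ C * |t - s| ^ η := by
        gcongr ?_ * ?_ ^ η
        exact abs_projIcc_sub_projIcc hT

lemma convolutionExistsAt_centeredExtension {𝕜 E₁ F : Type*} [NontriviallyNormedField 𝕜]
    [NormedAddCommGroup E₁] [NormedSpace 𝕜 E₁] [NormedAddCommGroup F] [NormedSpace 𝕜 F]
    {E : Type*} [NormedAddCommGroup E] [NormedSpace 𝕜 E] {x : ℝ → E}
    (B : E₁ →L[𝕜] E →L[𝕜] F) {μ : Measure ℝ} {f : ℝ → E₁} (hf : Integrable f μ)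
    (hx : ContinuousOn x (Icc 0 T)) (t : ℝ) :
    ConvolutionExistsAt f (centeredExtension hT x) t B μ :=
  BddAbove.convolutionExistsAt' B
    ((bddAbove_norm_centeredExtension hx).mono (image_subset_range _ _)) .univ (subset_univ _)
    hf.integrableOn (continuous_centeredExtension hx).aestronglyMeasurable

end CenteredExtension

section HolderPaths

variable {d : ℕ} {T η C : ℝ} {x : ℝ → Fin d → ℝ}

lemma HolderNormBound.nonneg (hT : 0 ≤ T) (hx : HolderNormBound η T x C) : 0 ≤ C :=
  (norm_nonneg _).trans (hx.1 0 (left_mem_Icc.2 hT))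

lemma HolderNormBound.norm_sub_zero_le (hT : 0 ≤ T) (hx : HolderNormBound η T x C) {t : ℝ}
    (ht : t ∈ Icc 0 T) : ‖x t - x 0‖ ≤ 2 * C := by
  rw [two_mul]
  exact norm_sub_le_of_le (hx.1 t ht) (hx.1 0 (left_mem_Icc.2 hT))

lemma HolderNormBound.continuousOn (hη : 0 < η) (hx : HolderNormBound η T x C) :
    ContinuousOn x (Icc 0 T) := by
  intro s hs
  have modulus_tendsto : Tendsto (fun t => C * |t - s| ^ η) (𝓝[Icc 0 T] s) (𝓝 0) := by
    have : Continuous fun t : ℝ => C * |t - s| ^ η :=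
      continuous_const.mul ((continuous_id.sub continuous_const).abs.rpow_const
        fun _ => .inr hη.le)
    simpa [Real.zero_rpow hη.ne'] using this.continuousWithinAt (s := Icc 0 T) (x := s).tendsto
  exact tendsto_iff_norm_sub_tendsto_zero.2 <| squeeze_zero'
    (.of_forall fun _ => norm_nonneg _) (eventually_nhdsWithin_of_forall (hx.2 s hs))
    modulus_tendsto

end HolderPaths

section ZTransform

/-- The operator `v ↦ M *ᵥ v` between spaces of vectors with the sup norm, linearly in the
matrix `M`. -/
def mulVecCLM {m n : Type*} [Finite m] [Fintype n] :
    Matrix m n ℝ →ₗ[ℝ] (n → ℝ) →L[ℝ] (m → ℝ) :=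
  LinearMap.toContinuousLinearMap.toLinearMap ∘ₗ Matrix.mulVecBilin ℝ ℝ

lemma integrable_linearMap_matrix_of_entries {α m n 𝕜 E : Type*} [MeasurableSpace α]
    {μ : Measure α} [Finite m] [Finite n] [NormedField 𝕜] [NormedAddCommGroup E]
    [NormedSpace 𝕜 E] (φ : Matrix m n 𝕜 →ₗ[𝕜] E) {f : α → Matrix m n 𝕜}
    (hf : ∀ i j, Integrable (fun s => f s i j) μ) : Integrable (φ ∘ f) μ := by
  classical
  have := Fintype.ofFinite m
  have := Fintype.ofFinite n
  have eq_sum (M : Matrix m n 𝕜) : φ M = ∑ i, ∑ j, M i j • φ (Matrix.single i j 1) := by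
    conv_lhs => rw [Matrix.matrix_eq_sum_single M]
    simp only [map_sum, ← map_smul, Matrix.smul_single, smul_eq_mul, mul_one]
  refine Integrable.congr ?_ (.of_forall fun s => (eq_sum (f s)).symm)
  exact integrable_finsetSum _ fun i _ => integrable_finsetSum _ fun j _ => (hf i j).smul_const _

variable {d : ℕ} {T η C : ℝ} (A : Matrix (Fin d) (Fin d) ℝ) {L₀ : ℝ → Matrix (Fin d) (Fin d) ℝ}
  {x y : ℝ → Fin d → ℝ}

lemma zTransform_eq_convolutionWithAtom (hT : 0 ≤ T) (L₀ : ℝ → Matrix (Fin d) (Fin d) ℝ)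
    (x : ℝ → Fin d → ℝ) {t : ℝ} (ht : t ∈ Icc 0 T) :
    zTransform A L₀ x t =
      convolutionWithAtom (.id ℝ ((Fin d → ℝ) →L[ℝ] (Fin d → ℝ))) (volume.restrict (Ioc 0 T))
        (mulVecCLM A) (mulVecCLM ∘ L₀) (centeredExtension hT x) t := by
  have integral_eq : ∫ s in (0 : ℝ)..t, L₀ s *ᵥ (x (t - s) - x 0) =
      ∫ s in Ioc 0 T, L₀ s *ᵥ centeredExtension hT x (t - s) := by
    rw [intervalIntegral.integral_of_le ht.1]
    calc ∫ s in Ioc 0 t, L₀ s *ᵥ (x (t - s) - x 0)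
        = ∫ s in Ioc 0 t, L₀ s *ᵥ centeredExtension hT x (t - s) := by
          refine setIntegral_congr_fun measurableSet_Ioc fun s hs => ?_
          simp only [centeredExtension_of_mem (hT := hT) (x := x) (r := t - s)
            ⟨by linarith [hs.2], by linarith [hs.1, ht.2]⟩]
      _ = ∫ s in Ioc 0 T, L₀ s *ᵥ centeredExtension hT x (t - s) := by
          refine (setIntegral_eq_of_subset_of_forall_sdiff_eq_zero measurableSet_Ioc
            (Ioc_subset_Ioc_right ht.2) fun s hs => ?_).symm
          have hts : t < s := not_le.1 fun hst => hs.2 ⟨hs.1.1, hst⟩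
          rw [centeredExtension_of_nonpos (sub_nonpos.2 hts.le), Matrix.mulVec_zero]
  rw [zTransform, integral_eq, ← centeredExtension_of_mem (hT := hT) ht]
  rfl

lemma zTransform_apply_zero (L₀ : ℝ → Matrix (Fin d) (Fin d) ℝ) (x : ℝ → Fin d → ℝ) :
    zTransform A L₀ x 0 = 0 := by
  rw [zTransform, sub_self, Matrix.mulVec_zero, intervalIntegral.integral_same, add_zero]

lemma zTransform_smul (L₀ : ℝ → Matrix (Fin d) (Fin d) ℝ) (c : ℝ) (x : ℝ → Fin d → ℝ) (t : ℝ) :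
    zTransform A L₀ (c • x) t = c • zTransform A L₀ x t := by
  simp only [zTransform, Pi.smul_apply, ← smul_sub, Matrix.mulVec_smul,
    intervalIntegral.integral_smul, smul_add]

lemma zTransform_add (hT : 0 ≤ T) (hL : IntegrableOn (mulVecCLM ∘ L₀) (Ioc 0 T))
    (hx : ContinuousOn x (Icc 0 T)) (hy : ContinuousOn y (Icc 0 T)) {t : ℝ} (ht : t ∈ Icc 0 T) :
    zTransform A L₀ (x + y) t = zTransform A L₀ x t + zTransform A L₀ y t := by
  simp only [zTransform_eq_convolutionWithAtom A hT _ _ ht, centeredExtension_add]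
  exact convolutionWithAtom_add (mulVecCLM A) (convolutionExistsAt_centeredExtension _ hL hx t)
    (convolutionExistsAt_centeredExtension _ hL hy t)

lemma continuousOn_zTransform (hT : 0 ≤ T) (hL : IntegrableOn (mulVecCLM ∘ L₀) (Ioc 0 T))
    (hx : ContinuousOn x (Icc 0 T)) : ContinuousOn (zTransform A L₀ x) (Icc 0 T) :=
  (continuous_convolutionWithAtom _ (mulVecCLM A) hL (bddAbove_norm_centeredExtension hx)
    (continuous_centeredExtension hx)).continuousOn.congr
    fun _ ht => zTransform_eq_convolutionWithAtom A hT L₀ x ht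

/-- A bound for the operator norm of the `Z`-transform between spaces of centred paths on
`[0, T]`. -/
def zTransformBound (T : ℝ) (A : Matrix (Fin d) (Fin d) ℝ)
    (L₀ : ℝ → Matrix (Fin d) (Fin d) ℝ) : ℝ :=
  convolutionWithAtomBound (.id ℝ ((Fin d → ℝ) →L[ℝ] (Fin d → ℝ)))
    (volume.restrict (Ioc 0 T)) (mulVecCLM A) (mulVecCLM ∘ L₀)

lemma norm_zTransform_le (hT : 0 ≤ T) (hL : IntegrableOn (mulVecCLM ∘ L₀) (Ioc 0 T))
    (hx : ∀ t ∈ Icc 0 T, ‖x t - x 0‖ ≤ C) {t : ℝ} (ht : t ∈ Icc 0 T) :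
    ‖zTransform A L₀ x t‖ ≤ zTransformBound T A L₀ * C := by
  rw [zTransform_eq_convolutionWithAtom A hT L₀ x ht]
  exact norm_convolutionWithAtom_le _ (mulVecCLM A) hL (norm_centeredExtension_le hx) t

lemma norm_zTransform_sub_le (hL : IntegrableOn (mulVecCLM ∘ L₀) (Ioc 0 T)) (hC : 0 ≤ C)
    (hη : 0 ≤ η) (hxc : ContinuousOn x (Icc 0 T))
    (hx : ∀ s ∈ Icc 0 T, ∀ t ∈ Icc 0 T, ‖x t - x s‖ ≤ C * |t - s| ^ η)
    {s t : ℝ} (hs : s ∈ Icc 0 T) (ht : t ∈ Icc 0 T) :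
    ‖zTransform A L₀ x t - zTransform A L₀ x s‖ ≤ zTransformBound T A L₀ * (C * |t - s| ^ η) := by
  have hT : 0 ≤ T := hs.1.trans hs.2
  rw [zTransform_eq_convolutionWithAtom A hT L₀ x ht,
    zTransform_eq_convolutionWithAtom A hT L₀ x hs]
  refine norm_convolutionWithAtom_sub_le (mulVecCLM A) hL
    (convolutionExistsAt_centeredExtension _ hL hxc s)
    (convolutionExistsAt_centeredExtension _ hL hxc t) fun u => ?_
  simpa only [sub_sub_sub_cancel_right] using
    norm_centeredExtension_sub_le hC hη hx (s - u) (t - u)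

lemma HolderOnIcc.map_zTransform (hT : 0 ≤ T) (hL : IntegrableOn (mulVecCLM ∘ L₀) (Ioc 0 T))
    (hη : 0 ≤ η) (hx : HolderOnIcc η T x) : HolderOnIcc η T (zTransform A L₀ x) := by
  obtain ⟨hxc, C, hC⟩ := hx
  refine ⟨continuousOn_zTransform A hT hL hxc, zTransformBound T A L₀ * |C|, fun s hs t ht => ?_⟩
  rw [mul_assoc]
  refine norm_zTransform_sub_le A hL (abs_nonneg C) hη hxc (fun s hs t ht => ?_) hs ht
  exact (hC s hs t ht).trans (by gcongr; exact le_abs_self C)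

lemma HolderNormBound.norm_zTransform_sub_zTransform_le
    (hL : IntegrableOn (mulVecCLM ∘ L₀) (Ioc 0 T)) (hη : 0 ≤ η) (hx : HolderNormBound η T x C)
    {s t : ℝ} (hs : s ∈ Icc 0 T) (ht : t ∈ Icc 0 T) :
    ‖zTransform A L₀ x t - zTransform A L₀ x s‖ ≤
      2 * zTransformBound T A L₀ * C * |t - s| ^ η := by
  have hT : 0 ≤ T := hs.1.trans hs.2
  have hC : 0 ≤ C := hx.nonneg hT
  have hM : 0 ≤ zTransformBound T A L₀ := convolutionWithAtomBound_nonneg _ (mulVecCLM A)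
  -- For exponent `0` the path need not be continuous, so its convolution may fail to exist and
  -- only the sup-norm bound is available; for positive exponents increments of `Z x` are
  -- convolutions.
  obtain rfl | hη := hη.eq_or_lt
  · have norm_le : ∀ r ∈ Icc 0 T, ‖zTransform A L₀ x r‖ ≤ zTransformBound T A L₀ * C :=
      fun r hr => norm_zTransform_le A hT hL (fun t ht => by
        simpa only [Real.rpow_zero, mul_one] using hx.2 0 (left_mem_Icc.2 hT) t ht) hr
    calc ‖zTransform A L₀ x t - zTransform A L₀ x s‖
        ≤ zTransformBound T A L₀ * C + zTransformBound T A L₀ * C :=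
          norm_sub_le_of_le (norm_le t ht) (norm_le s hs)
      _ = 2 * zTransformBound T A L₀ * C * |t - s| ^ (0 : ℝ) := by
          rw [Real.rpow_zero]
          ring
  · calc ‖zTransform A L₀ x t - zTransform A L₀ x s‖
        ≤ zTransformBound T A L₀ * (C * |t - s| ^ η) :=
          norm_zTransform_sub_le A hL hC hη.le (hx.continuousOn hη) hx.2 hs ht
      _ ≤ 2 * (zTransformBound T A L₀ * (C * |t - s| ^ η)) :=
          le_mul_of_one_le_left (by positivity) one_le_two
      _ = 2 * zTransformBound T A L₀ * C * |t - s| ^ η := by ring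

lemma HolderNormBound.map_zTransform (hT : 0 ≤ T) (hL : IntegrableOn (mulVecCLM ∘ L₀) (Ioc 0 T))
    (hη : 0 ≤ η) (hx : HolderNormBound η T x C) :
    HolderNormBound η T (zTransform A L₀ x) (2 * zTransformBound T A L₀ * C) := by
  refine ⟨fun t ht => ?_, fun s hs t ht => hx.norm_zTransform_sub_zTransform_le A hL hη hs ht⟩
  calc ‖zTransform A L₀ x t‖ ≤ zTransformBound T A L₀ * (2 * C) :=
        norm_zTransform_le A hT hL (fun s => hx.norm_sub_zero_le hT) ht
    _ = 2 * zTransformBound T A L₀ * C := by ring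

theorem volterra_zTransform_continuous_linear_on_holder_general
    {d : ℕ} {T : ℝ} (hT : 0 ≤ T) (A : Matrix (Fin d) (Fin d) ℝ)
    {L₀ : ℝ → Matrix (Fin d) (Fin d) ℝ}
    (hL : ∀ i j, IntervalIntegrable (fun t => L₀ t i j) volume 0 T) {η : ℝ} (hη : 0 ≤ η) :
    (∀ x : ℝ → Fin d → ℝ, HolderOnIcc η T x →
      HolderOnIcc η T (zTransform A L₀ x) ∧ zTransform A L₀ x 0 = 0) ∧
    (∀ x y : ℝ → Fin d → ℝ, HolderOnIcc η T x → HolderOnIcc η T y →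
      ∀ t ∈ Set.Icc (0:ℝ) T,
        zTransform A L₀ (x + y) t = zTransform A L₀ x t + zTransform A L₀ y t) ∧
    (∀ (c : ℝ) (x : ℝ → Fin d → ℝ), HolderOnIcc η T x →
      ∀ t ∈ Set.Icc (0:ℝ) T, zTransform A L₀ (c • x) t = c • zTransform A L₀ x t) ∧
    (∃ M : ℝ, 0 ≤ M ∧ ∀ (C : ℝ) (x : ℝ → Fin d → ℝ), HolderNormBound η T x C →
      HolderNormBound η T (zTransform A L₀ x) (M * C)) := by
  have hL₀ : Integrable (mulVecCLM ∘ L₀) (volume.restrict (Ioc 0 T)) :=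
    integrable_linearMap_matrix_of_entries (mulVecCLM (m := Fin d) (n := Fin d)) fun i j =>
      (intervalIntegrable_iff_integrableOn_Ioc_of_le hT).1 (hL i j)
  refine ⟨fun x hx => ⟨hx.map_zTransform A hT hL₀ hη, zTransform_apply_zero A L₀ x⟩,
    fun x y hx hy t ht => zTransform_add A hT hL₀ hx.1 hy.1 ht,
    fun c x _ t _ => zTransform_smul A L₀ c x t,
    2 * zTransformBound T A L₀, ?_, fun C x hx => hx.map_zTransform A hT hL₀ hη⟩
  exact mul_nonneg zero_le_two (convolutionWithAtomBound_nonneg _ (mulVecCLM A))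

end ZTransform

/-- For a completely monotone kernel `K ∈ L¹([0,T])` with `K(t₀) ≻ 0`
for some `t₀ > 0` and resolvent of the first kind `L`, the map
`Z_t(x) = ∫_{[0,t]} L(ds)(x_{t-s} - x₀)` sends `C^η([0,T]; ℝ^d)` into
`C₀^η([0,T]; ℝ^d)` for every `η ∈ [0,1]`, and is a continuous linear operator
between these spaces. -/
theorem volterra_zTransform_continuous_linear_on_holder
    {d : ℕ} (T : ℝ) (hT : 0 < T)
    (K : ℝ → Matrix (Fin d) (Fin d) ℝ)
    (A : Matrix (Fin d) (Fin d) ℝ) (L₀ : ℝ → Matrix (Fin d) (Fin d) ℝ)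
    (hKint : ∀ i j, IntervalIntegrable (fun t => K t i j) volume 0 T)
    (hKcm : CompletelyMonotoneMat K)
    (hKpos : ∃ t₀ > (0:ℝ), ∀ v : Fin d → ℝ, v ≠ 0 → 0 < v ⬝ᵥ (K t₀).mulVec v)
    (hres : IsResolventFirstKind K A L₀)
    (η : ℝ) (hη : η ∈ Set.Icc (0:ℝ) 1) :
    -- `Z` maps `C^η` into `C₀^η`
    (∀ x : ℝ → Fin d → ℝ, HolderOnIcc η T x →
      HolderOnIcc η T (zTransform A L₀ x) ∧ zTransform A L₀ x 0 = 0) ∧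
    -- `Z` is linear
    (∀ x y : ℝ → Fin d → ℝ, HolderOnIcc η T x → HolderOnIcc η T y →
      ∀ t ∈ Set.Icc (0:ℝ) T,
        zTransform A L₀ (x + y) t = zTransform A L₀ x t + zTransform A L₀ y t) ∧
    (∀ (c : ℝ) (x : ℝ → Fin d → ℝ), HolderOnIcc η T x →
      ∀ t ∈ Set.Icc (0:ℝ) T, zTransform A L₀ (c • x) t = c • zTransform A L₀ x t) ∧
    -- `Z` is continuous (bounded) for the `C^η`-norms
    (∃ M : ℝ, 0 ≤ M ∧ ∀ (C : ℝ) (x : ℝ → Fin d → ℝ), HolderNormBound η T x C →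
      HolderNormBound η T (zTransform A L₀ x) (M * C)) :=
  volterra_zTransform_continuous_linear_on_holder_general hT.le A (hres.1 T hT) hη.1

end
end

section
/- Suppose Assumption VOU is satisfied and let E_β ∈ L²_loc(ℝ₊) be the unique solution of E_β(t) = K(t) + ∫₀^t K(t−s) β E_β(s) ds. Then E_β ∈ L¹(ℝ₊) ∩ L²(ℝ₊) is completely monotone and ∫₀^∞ E_β(t) dt = 1/(‖K‖_{L¹(ℝ₊)}⁻¹ + |β|), with the convention 1/∞ = 0 when ‖K‖_{L¹(ℝ₊)} = ∞. Moreover, for each N ≥ 1: lim_{t→∞} sup_{β ≤ −1/N} (∫_t^∞ E_β(r) dr + ∫_t^∞ E_β(r)² dr) = 0. -/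
open MeasureTheory Set Filter
open scoped ENNReal NNReal Topology

noncomputable section

/-- A scalar kernel is completely monotone: `C^∞` on `(0,∞)` with
`(-1)^n K^{(n)}(t) ≥ 0` for all `n` and `t > 0`. -/
def CompletelyMonotoneFn (K : ℝ → ℝ) : Prop :=
  ContDiffOn ℝ (⊤ : ℕ∞) K (Set.Ioi 0) ∧
  ∀ (n : ℕ) (t : ℝ), 0 < t → 0 ≤ (-1 : ℝ) ^ n * iteratedDerivWithin n K (Set.Ioi 0) t

/-- Assumption (VOU) on the kernel: `0 ≤ K ∈ L²_loc(ℝ₊)` completely monotone, and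
there is `γ ∈ (0,1]` with
`sup_{0 ≤ t-s ≤ 1} (t-s)^{-2γ}(∫_s^t K(r)² dr + ∫₀^∞ (K((t-s)+r)-K(r))² dr) < ∞`. -/
def AssumptionVOUKernel (K : ℝ → ℝ) (γ : ℝ) : Prop :=
  (∀ t > (0:ℝ), 0 ≤ K t) ∧ CompletelyMonotoneFn K ∧
  (∀ T > (0:ℝ), IntervalIntegrable (fun t => (K t) ^ 2) volume 0 T) ∧
  γ ∈ Set.Ioc (0:ℝ) 1 ∧
  ∃ Cγ : ℝ, ∀ s t : ℝ, 0 ≤ s → s ≤ t → t - s ≤ 1 →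
    IntegrableOn (fun r => (K ((t - s) + r) - K r) ^ 2) (Set.Ioi 0) ∧
    (∫ r in s..t, (K r) ^ 2) + (∫ r in Set.Ioi (0:ℝ), (K ((t - s) + r) - K r) ^ 2) ≤
      Cγ * (t - s) ^ (2 * γ)

/-- `E_β ∈ L²_loc(ℝ₊)` solves the linear Volterra equation
`E_β(t) = K(t) + ∫₀ᵗ K(t-s) β E_β(s) ds`. -/
def SolvesResolventEq (K : ℝ → ℝ) (β : ℝ) (E : ℝ → ℝ) : Prop :=
  (∀ T > (0:ℝ), IntervalIntegrable (fun t => (E t) ^ 2) volume 0 T) ∧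
  ∀ t > (0:ℝ), E t = K t + ∫ s in (0:ℝ)..t, K (t - s) * (β * E s)

/-- `‖K‖_{L¹(ℝ₊)} = ∫₀^∞ K(t) dt ∈ [0,∞]`. -/
noncomputable def normL1 (K : ℝ → ℝ) : ℝ≥0∞ :=
  ∫⁻ t in Set.Ioi (0:ℝ), ENNReal.ofReal (K t)

/-!
A completely monotone function on `(0, ∞)` is a pointwise limit of sums `∑ cᵢ exp (-xᵢ t)` with
`cᵢ, xᵢ ≥ 0`; the Hausdorff moment problem on `[0, 1]`, solved by Bernstein polynomials, provides
these sums. For a kernel `⟪v, exp (-tT) v⟫` with `T` diagonal and nonnegative, the resolvent at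
`l ≥ 0` is `⟪v, exp (-t(T + l v ⊗ v)) v⟫`, again completely monotone because the rank-one
perturbation is a positive operator. The resolvent depends continuously on the kernel, by an
identity in the convolution algebra of locally square integrable functions supported on `(0, ∞)`,
and complete monotonicity passes to pointwise limits.

For integrable kernels the formula for `∫ E` is the resolvent equation integrated over the
half-line; multiplication by `exp (-a t)` makes every completely monotone kernel integrable, and
`a → 0` gives the general case. The resolvent identity also shows that `E` decreases as `β`
decreases, so the tails for `β ≤ α` are dominated by those for `β = α`.
-/

/-- The signed derivatives of a completely monotone function: `F k` stands for `(-1)^k f^(k)` on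
`(0,∞)`. -/
def CompletelyMonotoneFamily (F : ℕ → ℝ → ℝ) : Prop :=
  ∀ (k : ℕ) (t : ℝ), 0 < t → HasDerivAt (F k) (-F (k + 1) t) t ∧ 0 ≤ F k t

namespace CompletelyMonotoneFamily

variable {F : ℕ → ℝ → ℝ}

lemma hasDerivAt (h : CompletelyMonotoneFamily F) (k : ℕ) {t : ℝ} (ht : 0 < t) :
    HasDerivAt (F k) (-F (k + 1) t) t :=
  (h k t ht).1

lemma nonneg (h : CompletelyMonotoneFamily F) (k : ℕ) {t : ℝ} (ht : 0 < t) : 0 ≤ F k t :=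
  (h k t ht).2

lemma iteratedDerivWithin_eq (h : CompletelyMonotoneFamily F) {f : ℝ → ℝ}
    (hf : EqOn (F 0) f (Ioi 0)) (n : ℕ) :
    EqOn (iteratedDerivWithin n f (Ioi 0)) (fun t => (-1) ^ n * F n t) (Ioi 0) := by
  induction n with
  | zero => intro t ht; simp [hf ht]
  | succ n ih =>
    intro t ht
    rw [iteratedDerivWithin_succ, derivWithin_congr ih (ih ht),
      ((h.hasDerivAt n ht).const_mul ((-1) ^ n)).hasDerivWithinAt.derivWithin
        (uniqueDiffOn_Ioi 0 t ht)]
    ring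

lemma completelyMonotoneFn (h : CompletelyMonotoneFamily F) {f : ℝ → ℝ}
    (hf : EqOn (F 0) f (Ioi 0)) : CompletelyMonotoneFn f := by
  refine ⟨contDiffOn_of_differentiableOn_deriv fun m _ t ht => ?_, fun n t ht => ?_⟩
  · exact ((h.hasDerivAt m ht).const_mul ((-1) ^ m)).differentiableAt.differentiableWithinAt.congr
      (h.iteratedDerivWithin_eq hf m) (h.iteratedDerivWithin_eq hf m ht)
  · rw [h.iteratedDerivWithin_eq hf n ht, ← mul_assoc, ← mul_pow]
    simpa using h.nonneg n ht

lemma continuousOn (h : CompletelyMonotoneFamily F) (k : ℕ) : ContinuousOn (F k) (Ioi 0) :=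
  fun _ ht => (h.hasDerivAt k ht).continuousAt.continuousWithinAt

lemma antitoneOn (h : CompletelyMonotoneFamily F) (k : ℕ) : AntitoneOn (F k) (Ioi 0) := by
  refine antitoneOn_of_hasDerivWithinAt_nonpos (convex_Ioi 0) (h.continuousOn k)
    (f' := fun t => -F (k + 1) t) ?_ ?_
  all_goals rw [interior_Ioi]
  · exact fun t ht => (h.hasDerivAt k ht).hasDerivWithinAt
  · exact fun t ht => neg_nonpos.2 (h.nonneg (k + 1) ht)

lemma exists_sub_eq_mul (h : CompletelyMonotoneFamily F) (k : ℕ) {s t : ℝ} (hs : 0 < s)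
    (hst : s < t) : ∃ c ∈ Ioo s t, F k s - F k t = F (k + 1) c * (t - s) := by
  obtain ⟨c, hc, hslope⟩ := exists_hasDerivAt_eq_slope (F k) (fun x => -F (k + 1) x) hst
    ((h.continuousOn k).mono fun x hx => hs.trans_le hx.1)
    (fun x hx => h.hasDerivAt k (hs.trans hx.1))
  rw [eq_div_iff (sub_pos.2 hst).ne'] at hslope
  exact ⟨c, hc, by linarith⟩

lemma mul_le_sub (h : CompletelyMonotoneFamily F) (k : ℕ) {s t : ℝ} (hs : 0 < s) (hst : s < t) :
    F (k + 1) t * (t - s) ≤ F k s - F k t := by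
  obtain ⟨c, hc, hslope⟩ := h.exists_sub_eq_mul k hs hst
  have := h.antitoneOn (k + 1) (hs.trans hc.1 : c ∈ Ioi 0) (hs.trans hst : t ∈ Ioi 0) hc.2.le
  rw [hslope]
  gcongr

lemma sub_le_mul (h : CompletelyMonotoneFamily F) (k : ℕ) {s t : ℝ} (hs : 0 < s) (hst : s < t) :
    F k s - F k t ≤ F (k + 1) s * (t - s) := by
  obtain ⟨c, hc, hslope⟩ := h.exists_sub_eq_mul k hs hst
  have := h.antitoneOn (k + 1) (hs : s ∈ Ioi 0) (hs.trans hc.1 : c ∈ Ioi 0) hc.1.le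
  rw [hslope]
  gcongr

lemma succ_le (h : CompletelyMonotoneFamily F) (k : ℕ) {t : ℝ} (ht : 0 < t) :
    F (k + 1) t ≤ 2 / t * F k (t / 2) := by
  have slope := h.mul_le_sub k (half_pos ht) (half_lt_self ht)
  have := h.nonneg k ht
  rw [sub_half] at slope
  rw [div_mul_eq_mul_div, le_div_iff₀ ht]
  linarith

lemma abs_taylor_remainder_le (h : CompletelyMonotoneFamily F) (k : ℕ) {a s t : ℝ} (ha : 0 < a)
    (has : a ≤ s) (hat : a ≤ t) :
    |F k t - F k s + F (k + 1) s * (t - s)| ≤ F (k + 2) a * (t - s) ^ 2 := by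
  have slope_variation : ∀ u v, a ≤ u → u < v →
      F (k + 1) u - F (k + 1) v ≤ F (k + 2) a * (v - u) := fun u v hu huv =>
    (h.sub_le_mul (k + 1) (ha.trans_le hu) huv).trans <| mul_le_mul_of_nonneg_right
      (h.antitoneOn (k + 2) (ha : a ∈ Ioi 0) (ha.trans_le hu : u ∈ Ioi 0) hu) (sub_pos.2 huv).le
  rcases lt_trichotomy s t with hst | rfl | hst
  · have lower := h.mul_le_sub k (ha.trans_le has) hst
    have upper := h.sub_le_mul k (ha.trans_le has) hst
    have := mul_le_mul_of_nonneg_right (slope_variation s t has hst) (sub_pos.2 hst).le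
    rw [abs_le]
    constructor <;> linarith
  · simp
  · have lower := h.mul_le_sub k (ha.trans_le hat) hst
    have upper := h.sub_le_mul k (ha.trans_le hat) hst
    have := mul_le_mul_of_nonneg_right (slope_variation t s hat hst) (sub_pos.2 hst).le
    rw [abs_le]
    constructor <;> linarith

lemma sub_comp_add_const (h : CompletelyMonotoneFamily F) {c : ℝ} (hc : 0 ≤ c) :
    CompletelyMonotoneFamily fun k t => F k t - F k (t + c) := fun k t ht => by
  have htc : 0 < t + c := by linarith
  refine ⟨((h.hasDerivAt k ht).sub ((h.hasDerivAt k htc).comp_add_const t c)).congr_deriv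
    (by ring), sub_nonneg.2 ?_⟩
  exact h.antitoneOn k (ht : t ∈ Ioi 0) (htc : t + c ∈ Ioi 0) (by linarith)

variable {ι : Type*} {l : Filter ι} {F : ι → ℕ → ℝ → ℝ} {f : ℝ → ℝ}

lemma eventually_le_of_tendsto (hF : ∀ i, CompletelyMonotoneFamily (F i))
    (hf : ∀ t, 0 < t → Tendsto (fun i => F i 0 t) l (𝓝 (f t))) (k : ℕ) :
    ∀ t, 0 < t → ∃ C, ∀ᶠ i in l, F i k t ≤ C := by
  induction k with
  | zero => exact fun t ht => ⟨f t + 1, (hf t ht).eventually_le_const (lt_add_one _)⟩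
  | succ k ih =>
    intro t ht
    obtain ⟨C, hC⟩ := ih (t / 2) (half_pos ht)
    refine ⟨2 / t * C, hC.mono fun i hi => ((hF i).succ_le k ht).trans ?_⟩
    gcongr

lemma exists_tendsto_ultrafilter {l : Ultrafilter ι} (hF : ∀ i, CompletelyMonotoneFamily (F i))
    (hf : ∀ t, 0 < t → Tendsto (fun i => F i 0 t) l (𝓝 (f t))) (k : ℕ) {t : ℝ} (ht : 0 < t) :
    ∃ y, Tendsto (fun i => F i k t) l (𝓝 y) := by
  obtain ⟨C, hC⟩ := eventually_le_of_tendsto hF hf k t ht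
  have hmem : ∀ᶠ i in (l : Filter ι), F i k t ∈ Icc 0 C :=
    hC.mono fun i hi => ⟨(hF i).nonneg k ht, hi⟩
  obtain ⟨y, -, hy⟩ := isCompact_Icc.ultrafilter_le_nhds (l.map fun i => F i k t)
    (le_principal_iff.2 hmem)
  exact ⟨y, hy⟩

lemma of_tendsto [l.NeBot] {G : ℕ → ℝ → ℝ} (hF : ∀ i, CompletelyMonotoneFamily (F i))
    (hG : ∀ k t, 0 < t → Tendsto (fun i => F i k t) l (𝓝 (G k t))) :
    CompletelyMonotoneFamily G := by
  intro k t ht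
  refine ⟨?_, ge_of_tendsto' (hG k t ht) fun i => (hF i).nonneg k ht⟩
  have remainder_isBigO : (fun x => G k x - G k t - (x - t) • -G (k + 1) t) =O[𝓝 t]
      fun x => ‖x - t‖ ^ 2 := by
    refine .of_bound (G (k + 2) (t / 2)) ?_
    filter_upwards [Ioi_mem_nhds (half_lt_self ht)] with x (hx : t / 2 < x)
    have hbound := le_of_tendsto_of_tendsto'
      (((hG k x ((half_pos ht).trans hx)).sub (hG k t ht)).add
        ((hG (k + 1) t ht).mul_const (x - t))).abs
      ((hG (k + 2) _ (half_pos ht)).mul_const ((x - t) ^ 2))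
      fun i => (hF i).abs_taylor_remainder_le k (half_pos ht) (half_le_self ht.le) hx.le
    simpa [mul_comm] using hbound
  rw [hasDerivAt_iff_isLittleO]
  refine remainder_isBigO.trans_isLittleO ?_
  simpa using (Asymptotics.isLittleO_pow_sub_sub t one_lt_two)

end CompletelyMonotoneFamily

namespace CompletelyMonotoneFn

variable {f : ℝ → ℝ}

lemma exists_family (h : CompletelyMonotoneFn f) :
    ∃ F, CompletelyMonotoneFamily F ∧ F 0 = f := by
  refine ⟨fun k t => (-1) ^ k * iteratedDerivWithin k f (Ioi 0) t,
    fun k t ht => ⟨?_, h.2 k t ht⟩, by ext; simp⟩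
  have hdiff : DifferentiableWithinAt ℝ (iteratedDerivWithin k f (Ioi 0)) (Ioi 0) t :=
    h.1.differentiableOn_iteratedDerivWithin (by exact_mod_cast WithTop.coe_lt_top k)
      (uniqueDiffOn_Ioi _) t ht
  beta_reduce
  rw [iteratedDerivWithin_succ]
  exact ((hdiff.hasDerivWithinAt.hasDerivAt (Ioi_mem_nhds ht)).const_mul _).congr_deriv (by ring)

lemma continuousOn (h : CompletelyMonotoneFn f) : ContinuousOn f (Ioi 0) := h.1.continuousOn

lemma nonneg (h : CompletelyMonotoneFn f) {t : ℝ} (ht : 0 < t) : 0 ≤ f t := by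
  simpa using h.2 0 t ht

lemma antitoneOn (h : CompletelyMonotoneFn f) : AntitoneOn f (Ioi 0) := by
  obtain ⟨F, hF, rfl⟩ := h.exists_family
  exact hF.antitoneOn 0

/- The derivatives of the approximants are locally bounded because each is controlled by the
previous one, so along an ultrafilter all of them converge. -/
lemma of_tendsto {ι : Type*} {l : Filter ι} [l.NeBot] {φ : ι → ℝ → ℝ}
    (hφ : ∀ i, CompletelyMonotoneFn (φ i))
    (hf : ∀ t, 0 < t → Tendsto (fun i => φ i t) l (𝓝 (f t))) : CompletelyMonotoneFn f := by
  choose F hF hF0 using fun i => (hφ i).exists_family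
  have hlim : ∀ t, 0 < t → Tendsto (fun i => F i 0 t) (Ultrafilter.of l) (𝓝 (f t)) := by
    simp only [hF0]
    exact fun t ht => (hf t ht).mono_left (Ultrafilter.of_le l)
  choose! G hG using fun k t (ht : 0 < t) =>
    CompletelyMonotoneFamily.exists_tendsto_ultrafilter hF hlim k ht
  exact (CompletelyMonotoneFamily.of_tendsto hF hG).completelyMonotoneFn
    fun t ht => tendsto_nhds_unique (hG 0 t ht) (hlim t ht)

end CompletelyMonotoneFn

section HausdorffMoments

open fwdDiff fwdDiff_aux

lemma eq_sum_choose_smul_fwdDiff {M G : Type*} [AddCommMonoid M] [AddCommGroup G] (f : M → G)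
    (h y : M) (m : ℕ) :
    f y = ∑ i ∈ Finset.range (m + 1),
      m.choose i • (-1 : ℤ) ^ (m - i) • Δ_[h] ^[m - i] f (y + i • h) := by
  have hcomm : Commute (shiftₗ M G h) (-fwdDiffₗ M G h) :=
    ((Commute.refl _).add_left (Commute.one_left _)).neg_right
  have hone : shiftₗ M G h + -fwdDiffₗ M G h = 1 := by
    rw [shiftₗ]
    abel
  have hpow := hcomm.add_pow m
  rw [hone, one_pow] at hpow
  conv_lhs => rw [show f y = (1 : Module.End ℤ (M → G)) f y from rfl, hpow]
  rw [LinearMap.sum_apply, Finset.sum_apply]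
  refine Finset.sum_congr rfl fun i _ => ?_
  rw [← Nat.cast_comm, ← nsmul_eq_mul, LinearMap.smul_apply, Pi.smul_apply, Module.End.mul_apply,
    shiftₗ_pow_apply, ← neg_one_zsmul, smul_pow, LinearMap.smul_apply, Pi.smul_apply,
    coe_fwdDiffₗ_pow]

lemma choose_succ_div_choose_succ (v N j : ℕ) :
    (v.choose (j + 1) : ℝ) / N.choose (j + 1) =
      v.choose j / N.choose j * ((v - j) / (N - j)) := by
  have hrec : ∀ n : ℕ, (n.choose (j + 1) : ℝ) * (j + 1) = n.choose j * (n - j) := by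
    intro n
    rcases le_or_gt j n with h | h
    · rw [← Nat.cast_sub h]
      exact_mod_cast Nat.choose_succ_right_eq n j
    · simp [Nat.choose_eq_zero_of_lt h, Nat.choose_eq_zero_of_lt (h.trans (Nat.lt_succ_self j))]
  rw [div_mul_div_comm, ← hrec, ← hrec, mul_div_mul_right _ _ (by positivity)]

lemma abs_sub_div_sub_sub_div_le {v N a : ℝ} (hv : 0 ≤ v) (hvN : v ≤ N) (ha : 0 ≤ a) (haN : a < N) :
    |(v - a) / (N - a) - v / N| ≤ a / (N - a) := by
  have hN : 0 < N := ha.trans_lt haN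
  have hNa : 0 < N - a := sub_pos.2 haN
  have hsub : (v - a) / (N - a) - v / N = -((1 - v / N) * (a / (N - a))) := by
    field_simp
    ring
  have hfrac : v / N ≤ 1 := (div_le_one hN).2 hvN
  rw [hsub, abs_neg, abs_of_nonneg (mul_nonneg (sub_nonneg.2 hfrac) (by positivity))]
  exact mul_le_of_le_one_left (by positivity) (sub_le_self _ (by positivity))

lemma abs_choose_div_choose_sub_pow_le {v N j : ℕ} (hv : v ≤ N) (hj : j < N) :
    |(v.choose j : ℝ) / N.choose j - (v / N : ℝ) ^ j| ≤ (j : ℝ) * j / (N - j) := by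
  induction j with
  | zero => simp
  | succ j ih =>
    have hjN : (j : ℝ) + 1 < N := by exact_mod_cast hj
    have hvN : (v : ℝ) ≤ N := by exact_mod_cast hv
    set q := (v.choose j : ℝ) / N.choose j
    set y := (v : ℝ) / N
    have hq1 : q ≤ 1 := div_le_one_of_le₀
      (by exact_mod_cast Nat.choose_le_choose j hv) (by positivity)
    calc |(v.choose (j + 1) : ℝ) / N.choose (j + 1) - y ^ (j + 1)|
        = |q * ((v - j) / (N - j) - y) + y * (q - y ^ j)| := by
          rw [choose_succ_div_choose_succ]
          congr 1
          ring
      _ ≤ 1 * (j / (N - j)) + 1 * (j * j / (N - j)) := by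
          refine (abs_add_le _ _).trans (add_le_add ?_ ?_)
          · rw [abs_mul, abs_of_nonneg (by positivity : 0 ≤ q)]
            gcongr
            exact abs_sub_div_sub_sub_div_le (by positivity) hvN (by positivity) (by linarith)
          · rw [abs_mul, abs_of_nonneg (by positivity : 0 ≤ y)]
            gcongr
            · exact div_le_one_of_le₀ hvN (by positivity)
            · exact ih (by lia)
      _ = j * (j + 1) / (N - j) := by ring
      _ ≤ (j + 1 : ℕ) * (j + 1 : ℕ) / (N - (j + 1 : ℕ)) := by
          push_cast
          gcongr <;> linarith

lemma eq_sum_choose_mul_choose_div_choose {M : Type*} [AddCommMonoid M] (f : M → ℝ) (h y : M)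
    {N j : ℕ} (hj : j ≤ N) :
    f (y + j • h) = ∑ v ∈ Finset.range (N + 1),
      N.choose v * ((-1) ^ (N - v) * Δ_[h] ^[N - v] f (y + v • h)) *
        (v.choose j / N.choose j) := by
  obtain ⟨m, rfl⟩ := Nat.exists_eq_add_of_le hj
  rw [add_assoc, Finset.sum_range_add, Finset.sum_eq_zero (s := Finset.range j), zero_add,
    eq_sum_choose_smul_fwdDiff f h (y + j • h) m]
  · refine Finset.sum_congr rfl fun i _ => ?_
    have hchoose : ((j + m).choose (j + i) : ℝ) * (j + i).choose j =
        (j + m).choose j * m.choose i := by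
      have := Nat.choose_mul (n := j + m) (k := j + i) (s := j) (by lia)
      rw [Nat.add_sub_cancel_left, Nat.add_sub_cancel_left] at this
      exact_mod_cast this
    have hpos : ((j + m).choose j : ℝ) ≠ 0 := by
      exact_mod_cast (Nat.choose_pos (Nat.le_add_right j m)).ne'
    rw [Nat.add_sub_add_left, add_assoc, ← add_nsmul, nsmul_eq_mul, zsmul_eq_mul]
    push_cast
    field_simp
    linear_combination -(Δ_[h] ^[m - i] f (y + (j + i) • h)) * hchoose
  · intro v hv
    simp [Nat.choose_eq_zero_of_lt (Finset.mem_range.1 hv)]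

/- The Bernstein weights of order `N`, placed at the points `v / N`, have moments close to the
values of `f`. -/
lemma abs_sum_choose_mul_fwdDiff_mul_pow_sub_le {M : Type*} [AddCommMonoid M] {f : M → ℝ} {h y : M}
    (hf : ∀ m i : ℕ, 0 ≤ (-1) ^ m * Δ_[h] ^[m] f (y + i • h)) {N j : ℕ} (hj : j < N) :
    |(∑ v ∈ Finset.range (N + 1), N.choose v * ((-1) ^ (N - v) * Δ_[h] ^[N - v] f (y + v • h)) *
        ((v : ℝ) / N) ^ j) - f (y + j • h)| ≤ f y * (j * j / (N - j)) := by
  set w : ℕ → ℝ := fun v => N.choose v * ((-1) ^ (N - v) * Δ_[h] ^[N - v] f (y + v • h))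
  have hw (v : ℕ) : 0 ≤ w v := mul_nonneg (Nat.cast_nonneg _) (hf _ _)
  have hmass : f y = ∑ v ∈ Finset.range (N + 1), w v := by
    simpa using eq_sum_choose_mul_choose_div_choose f h y N.zero_le
  calc |(∑ v ∈ Finset.range (N + 1), w v * ((v : ℝ) / N) ^ j) - f (y + j • h)|
      = |∑ v ∈ Finset.range (N + 1), w v * ((v : ℝ) / N) ^ j -
          ∑ v ∈ Finset.range (N + 1), w v * (v.choose j / N.choose j)| := by
        rw [eq_sum_choose_mul_choose_div_choose f h y hj.le]
    _ ≤ ∑ v ∈ Finset.range (N + 1), w v * (j * j / (N - j)) := by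
        rw [← Finset.sum_sub_distrib]
        refine (Finset.abs_sum_le_sum_abs _ _).trans (Finset.sum_le_sum fun v hv => ?_)
        rw [← mul_sub, abs_mul, abs_of_nonneg (hw v), abs_sub_comm]
        exact mul_le_mul_of_nonneg_left
          (abs_choose_div_choose_sub_pow_le (Finset.mem_range_succ_iff.1 hv) hj) (hw v)
    _ = f y * (j * j / (N - j)) := by rw [← Finset.sum_mul, ← hmass]

/- The Bernstein atom at `0` only affects the moment of order `0`, which is omitted, so the atoms
can be kept positive. -/
lemma exists_sum_pow_approx {M : Type*} [AddCommMonoid M] {f : M → ℝ} {h y : M}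
    (hf : ∀ m i : ℕ, 0 ≤ (-1) ^ m * Δ_[h] ^[m] f (y + i • h)) (J : ℕ) {δ : ℝ} (hδ : 0 < δ) :
    ∃ (N : ℕ) (w : Fin N → ℝ≥0) (p : Fin N → ℝ), (∀ i, p i ∈ Ioc 0 1) ∧
      ∀ j ≤ J, |∑ i, w i * p i ^ (j + 1) - f (y + (j + 1) • h)| ≤ δ := by
  obtain ⟨n, hn⟩ := exists_nat_gt (f y * ((J + 1) * (J + 1)) / δ)
  set N := J + 1 + n + 1 with hN
  set w : ℕ → ℝ≥0 := fun v =>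
    ⟨N.choose v * ((-1) ^ (N - v) * Δ_[h] ^[N - v] f (y + v • h)),
      mul_nonneg (by positivity) (hf _ _)⟩
  refine ⟨N, fun i => w (i + 1), fun i => ((i + 1 : ℕ) : ℝ) / N, fun i =>
    ⟨by positivity, (div_le_one (by positivity)).2 (by exact_mod_cast i.2)⟩, fun j hj => ?_⟩
  have hatoms : ∑ i : Fin N, (w (i + 1) : ℝ) * (((i + 1 : ℕ) : ℝ) / N) ^ (j + 1) =
      ∑ v ∈ Finset.range (N + 1), (w v : ℝ) * ((v : ℝ) / N) ^ (j + 1) := by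
    rw [Finset.sum_range_succ',
      Fin.sum_univ_eq_sum_range fun i => (w (i + 1) : ℝ) * (((i + 1 : ℕ) : ℝ) / N) ^ (j + 1)]
    simp
  have hjJ : (j : ℝ) ≤ J := by exact_mod_cast hj
  rw [hatoms]
  calc |(∑ v ∈ Finset.range (N + 1), (w v : ℝ) * ((v : ℝ) / N) ^ (j + 1)) - f (y + (j + 1) • h)|
      ≤ f y * ((j + 1 : ℕ) * (j + 1 : ℕ) / (N - (j + 1 : ℕ))) :=
        abs_sum_choose_mul_fwdDiff_mul_pow_sub_le hf (by lia)
    _ ≤ f y * ((J + 1) * (J + 1) / (n + 1)) := by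
        refine mul_le_mul_of_nonneg_left ?_ (by simpa using hf 0 0)
        rw [hN]
        push_cast
        gcongr
        linarith
    _ ≤ δ := by
        rw [div_lt_iff₀ hδ] at hn
        rw [mul_div_assoc', div_le_iff₀ (by positivity)]
        linarith

lemma CompletelyMonotoneFamily.neg_one_pow_mul_fwdDiff_nonneg {F : ℕ → ℝ → ℝ}
    (hF : CompletelyMonotoneFamily F) {h t : ℝ} (hh : 0 ≤ h) (ht : 0 < t) (m : ℕ) :
    0 ≤ (-1) ^ m * Δ_[h] ^[m] (F 0) t := by
  induction m generalizing F with
  | zero => simpa using hF.nonneg 0 ht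
  | succ m ih =>
    have hstep : Δ_[h] (F 0) = (-1 : ℝ) • fun t => F 0 t - F 0 (t + h) := by
      ext t
      simp [fwdDiff]
    have := ih (hF.sub_comp_add_const hh)
    rw [Function.iterate_succ_apply, hstep, fwdDiff_iter_const_smul, Pi.smul_apply, smul_eq_mul,
      neg_one_mul, pow_succ, mul_neg_one, neg_mul_neg]
    exact this

end HausdorffMoments

section ExponentialSums

/-- The Laplace transform `t ↦ ∑ i, c i * exp (-(x i) t)` of a finitely supported measure on
`[0,∞)`. -/
def expSum {ι : Type*} [Fintype ι] (c x : ι → ℝ≥0) (t : ℝ) : ℝ :=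
  ∑ i, c i * Real.exp (-(x i * t))

variable {ι : Type*} [Fintype ι] (c x : ι → ℝ≥0)

lemma expSum_nonneg (t : ℝ) : 0 ≤ expSum c x t :=
  Finset.sum_nonneg fun _ _ => by positivity

lemma expSum_antitone : Antitone (expSum c x) := fun s t hst =>
  Finset.sum_le_sum fun i _ => by gcongr

lemma continuous_expSum : Continuous (expSum c x) := by
  unfold expSum
  fun_prop

end ExponentialSums

namespace CompletelyMonotoneFn

variable {f : ℝ → ℝ}

lemma exists_expSum_approx_grid (hf : CompletelyMonotoneFn f) {h : ℝ} (hh : 0 < h) (J : ℕ) {δ : ℝ}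
    (hδ : 0 < δ) :
    ∃ (N : ℕ) (c x : Fin N → ℝ≥0), ∀ j : ℕ, j ≤ J →
      |expSum c x (j * h) - f ((j + 2) * h)| ≤ δ := by
  obtain ⟨F, hF, rfl⟩ := hf.exists_family
  obtain ⟨N, w, p, hp, hwp⟩ := exists_sum_pow_approx
    (fun m i => hF.neg_one_pow_mul_fwdDiff_nonneg hh.le (by positivity : 0 < h + i • h) m) J hδ
  refine ⟨N, fun i => w i * (p i).toNNReal, fun i => (-Real.log (p i) / h).toNNReal,
    fun j hj => ?_⟩
  convert hwp j hj using 3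
  · refine Finset.sum_congr rfl fun i _ => ?_
    have hlog : 0 ≤ -Real.log (p i) / h :=
      div_nonneg (neg_nonneg.2 (Real.log_nonpos (hp i).1.le (hp i).2)) hh.le
    have hexp : Real.exp (-(-Real.log (p i) / h * (j * h))) = p i ^ j := by
      rw [← Real.exp_log (hp i).1, ← Real.exp_nat_mul, Real.exp_log (hp i).1]
      congr 1
      field_simp
    rw [NNReal.coe_mul, Real.coe_toNNReal _ (hp i).1.le, Real.coe_toNNReal _ hlog, hexp]
    ring
  · simp only [nsmul_eq_mul]
    push_cast
    ring_nf

lemma exists_expSum_approx (hf : CompletelyMonotoneFn f) {h : ℝ} (hh : 0 < h) (T : ℝ) {δ : ℝ}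
    (hδ : 0 < δ) :
    ∃ (N : ℕ) (c x : Fin N → ℝ≥0), ∀ t ∈ Ioc 0 T,
      f (t + 3 * h) - δ ≤ expSum c x t ∧ expSum c x t ≤ f t + δ := by
  obtain ⟨N, c, x, hgrid⟩ := hf.exists_expSum_approx_grid hh (⌊T / h⌋₊ + 1) hδ
  refine ⟨N, c, x, fun t ⟨ht, htT⟩ => ?_⟩
  set j := ⌊t / h⌋₊
  have hjT : j ≤ ⌊T / h⌋₊ := Nat.floor_le_floor (by gcongr)
  have hjt : j * h ≤ t := (le_div_iff₀ hh).1 (Nat.floor_le (by positivity))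
  have htj : t ≤ (j + 1) * h := (div_le_iff₀ hh).1 (Nat.lt_floor_add_one (t / h)).le
  have lower := (abs_le.1 (hgrid (j + 1) (by lia))).1
  have upper := (abs_le.1 (hgrid j (by lia))).2
  push_cast at lower
  have hf_lower : f (t + 3 * h) ≤ f ((j + 1 + 2) * h) := hf.antitoneOn
    (by positivity : (0 : ℝ) < (j + 1 + 2) * h) (by positivity : 0 < t + 3 * h) (by linarith)
  have hf_upper : f ((j + 2) * h) ≤ f t := hf.antitoneOn (mem_Ioi.2 ht)
    (by positivity : (0 : ℝ) < (j + 2) * h) (by linarith)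
  exact ⟨by linarith [expSum_antitone c x htj], by linarith [expSum_antitone c x hjt]⟩

lemma exists_seq_expSum_tendsto (hf : CompletelyMonotoneFn f) :
    ∃ (N : ℕ → ℕ) (c x : ∀ n, Fin (N n) → ℝ≥0),
      (∀ n : ℕ, ∀ t ∈ Ioc (0 : ℝ) n, expSum (c n) (x n) t ≤ f t + 1) ∧
      ∀ t, 0 < t → Tendsto (fun n => expSum (c n) (x n) t) atTop (𝓝 (f t)) := by
  choose N c x happrox using fun n : ℕ =>
    hf.exists_expSum_approx (Nat.one_div_pos_of_nat (α := ℝ) (n := n)) n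
      (Nat.one_div_pos_of_nat (α := ℝ) (n := n))
  have hzero : Tendsto (fun n : ℕ => 1 / ((n : ℝ) + 1)) atTop (𝓝 0) :=
    tendsto_one_div_add_atTop_nhds_zero_nat
  refine ⟨N, c, x, fun n t ht => (happrox n t ht).2.trans ?_, fun t ht => ?_⟩
  · gcongr
    exact (div_le_one (by positivity)).2 (by linarith [n.cast_nonneg (α := ℝ)])
  have hmem : ∀ᶠ n : ℕ in atTop, t ∈ Ioc 0 (n : ℝ) :=
    (eventually_ge_atTop ⌈t⌉₊).mono fun n hn => ⟨ht, Nat.ceil_le.1 hn⟩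
  have hshift : Tendsto (fun n : ℕ => t + 3 * (1 / ((n : ℝ) + 1))) atTop (𝓝 t) := by
    simpa using (hzero.const_mul 3).const_add t
  refine tendsto_of_tendsto_of_tendsto_of_le_of_le'
    (g := fun n : ℕ => f (t + 3 * (1 / ((n : ℝ) + 1))) - 1 / ((n : ℝ) + 1))
    (h := fun n : ℕ => f t + 1 / ((n : ℝ) + 1)) ?_ ?_
    (hmem.mono fun n hn => (happrox n t hn).1) (hmem.mono fun n hn => (happrox n t hn).2)
  · simpa using ((hf.continuousOn.continuousAt (Ioi_mem_nhds ht)).tendsto.comp hshift).sub hzero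
  · simpa using hzero.const_add (f t)

end CompletelyMonotoneFn

section SemigroupCoefficients

open ContinuousLinearMap InnerProductSpace
open scoped InnerProductSpace

variable {H : Type*} [NormedAddCommGroup H] [InnerProductSpace ℝ H] [CompleteSpace H]

/-- The diagonal matrix coefficient `t ↦ ⟪v, exp (-tT) v⟫` of the semigroup generated by the
bounded operator `-T`. -/
def semigroupCoeff (T : H →L[ℝ] H) (v : H) (t : ℝ) : ℝ :=
  ⟪v, NormedSpace.exp (t • -T) v⟫_ℝ

lemma isPositive_pow {T : H →L[ℝ] H} (hT : T.IsPositive) : ∀ k : ℕ, (T ^ k).IsPositive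
  | 0 => by simp
  | 1 => by rwa [pow_one]
  | k + 2 => by
    have := (isPositive_pow hT k).conj_adjoint T
    rwa [hT.isSelfAdjoint.adjoint_eq, ← mul_def, ← mul_def, ← pow_succ, ← pow_succ'] at this

lemma hasDerivAt_exp_smul_neg_apply (T : H →L[ℝ] H) (v : H) (t : ℝ) :
    HasDerivAt (fun t : ℝ => NormedSpace.exp (t • -T) v) (-T (NormedSpace.exp (t • -T) v)) t :=
  ((hasDerivAt_exp_smul_const' (𝕂 := ℝ) (-T) t).clm_apply (hasDerivAt_const t v)).congr_deriv
    (by simp)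

lemma isPositive_pow_mul_exp_smul_neg {T : H →L[ℝ] H} (hT : T.IsPositive) (k : ℕ) (t : ℝ) :
    (T ^ k * NormedSpace.exp (t • -T)).IsPositive := by
  let _ : NormedAlgebra ℚ (H →L[ℝ] H) := NormedAlgebra.restrictScalars ℚ ℝ _
  set U := NormedSpace.exp ((t / 2) • -T) with hU
  have hsplit : NormedSpace.exp (t • -T) = U * U := by
    rw [hU, ← NormedSpace.exp_add_of_commute (Commute.refl _), ← add_smul, add_halves]
  have hadj : adjoint U = U := IsSelfAdjoint.adjoint_eq <| IsSelfAdjoint.exp <|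
    (IsSelfAdjoint.all _).smul hT.isSelfAdjoint.neg
  have hcomm : Commute (T ^ k) U :=
    Commute.exp_right (((Commute.refl T).neg_right.smul_right _).pow_left k)
  have := (isPositive_pow hT k).conj_adjoint U
  rwa [hadj, ← mul_def, ← mul_def, ← mul_assoc, ← hcomm.eq, mul_assoc, ← hsplit] at this

lemma completelyMonotoneFn_semigroupCoeff {T : H →L[ℝ] H} (hT : T.IsPositive) (v : H) :
    CompletelyMonotoneFn (semigroupCoeff T v) := by
  have hfamily : CompletelyMonotoneFamily
      fun k t => ⟪v, (T ^ k) (NormedSpace.exp (t • -T) v)⟫_ℝ := fun k t _ => by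
    refine ⟨((hasDerivAt_const t v).inner ℝ ((T ^ k).hasFDerivAt.comp_hasDerivAt t
      (hasDerivAt_exp_smul_neg_apply T v t))).congr_deriv ?_, ?_⟩
    · simp [pow_succ]
    · exact (isPositive_pow_mul_exp_smul_neg hT k t).inner_nonneg_right v
  exact hfamily.completelyMonotoneFn fun t _ => by simp [semigroupCoeff]

lemma continuous_semigroupCoeff (T : H →L[ℝ] H) (v : H) : Continuous (semigroupCoeff T v) :=
  continuous_const.inner <| continuous_iff_continuousAt.2 fun t =>
    (hasDerivAt_exp_smul_neg_apply T v t).continuousAt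

/- Duhamel's formula: differentiate `⟪v, exp (-(t - s) T) exp (-s S) v⟫` in `s`, where `S` is the
perturbed operator. -/
lemma semigroupCoeff_add_rankOne (T : H →L[ℝ] H) (v : H) (l t : ℝ) :
    semigroupCoeff (T + l • rankOne ℝ v v) v t = semigroupCoeff T v t -
      l * ∫ s in (0 : ℝ)..t, semigroupCoeff T v (t - s) *
        semigroupCoeff (T + l • rankOne ℝ v v) v s := by
  set S := T + l • rankOne ℝ v v with hS
  set φ : ℝ → ℝ := fun s => ⟪v, NormedSpace.exp ((t - s) • -T) (NormedSpace.exp (s • -S) v)⟫_ℝ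
  have hderiv : ∀ s,
      HasDerivAt φ (-(l * (semigroupCoeff T v (t - s) * semigroupCoeff S v s))) s := by
    intro s
    have hT : HasDerivAt (fun s => NormedSpace.exp ((t - s) • -T))
        (NormedSpace.exp ((t - s) • -T) * T) s :=
      ((hasDerivAt_exp_smul_const (𝕂 := ℝ) (-T) (t - s)).comp_const_sub t s).congr_deriv (by simp)
    refine ((hasDerivAt_const s v).inner ℝ
      (hT.clm_apply (hasDerivAt_exp_smul_neg_apply S v s))).congr_deriv ?_
    simp only [hS, semigroupCoeff, mul_apply_eq_comp, add_apply, smul_apply, rankOne_apply, map_neg,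
      map_add, map_smul, inner_add_right, inner_neg_right, inner_smul_right, inner_zero_left,
      add_zero]
    ring
  have hcont : Continuous fun s => -(l * (semigroupCoeff T v (t - s) * semigroupCoeff S v s)) :=
    (continuous_const.mul (((continuous_semigroupCoeff T v).comp (continuous_sub_left t)).mul
      (continuous_semigroupCoeff S v))).neg
  have hftc := intervalIntegral.integral_eq_sub_of_hasDerivAt (fun s _ => hderiv s)
    (hcont.intervalIntegrable 0 t)
  rw [intervalIntegral.integral_neg, intervalIntegral.integral_const_mul] at hftc
  simp only [φ, sub_self, sub_zero, zero_smul, NormedSpace.exp_zero, one_apply_eq_self] at hftc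
  simp only [semigroupCoeff] at hftc ⊢
  linarith

lemma exp_apply_of_apply_eq_smul {A : H →L[ℝ] H} {u : H} {a : ℝ} (hu : A u = a • u) :
    NormedSpace.exp A u = Real.exp a • u := by
  have hpow : ∀ n : ℕ, (A ^ n) u = a ^ n • u := by
    intro n
    induction n with
    | zero => simp
    | succ n ih => rw [pow_succ, mul_apply_eq_comp, hu, map_smul, ih, smul_smul, pow_succ']
  have hA := (NormedSpace.exp_series_hasSum_exp' (𝕂 := ℝ) A).mapL (apply ℝ H u)
  have ha := (NormedSpace.exp_series_hasSum_exp' (𝕂 := ℝ) a).smul_const u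
  rw [← Real.exp_eq_exp_ℝ] at ha
  refine hA.unique (ha.congr_fun fun n => ?_)
  rw [apply_apply, smul_apply, hpow, smul_smul, smul_eq_mul]

lemma semigroupCoeff_sum_rankOne {ι : Type*} [Fintype ι] (b : OrthonormalBasis ι ℝ H)
    (x w : ι → ℝ) (t : ℝ) :
    semigroupCoeff (∑ i, x i • rankOne ℝ (b i) (b i)) (∑ i, w i • b i) t =
      ∑ i, w i ^ 2 * Real.exp (-(x i * t)) := by
  classical
  have heigen : ∀ i, (t • -∑ j, x j • rankOne ℝ (b j) (b j)) (b i) = -(x i * t) • b i := by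
    intro i
    simp [sum_apply, b.inner_eq_ite, smul_smul, mul_comm t]
  simp only [semigroupCoeff, map_sum, map_smul, exp_apply_of_apply_eq_smul (heigen _), smul_smul,
    b.orthonormal.inner_sum]
  simp [sq, mul_assoc]

end SemigroupCoefficients

open ContinuousLinearMap InnerProductSpace in
/- The sum `∑ cᵢ exp (-xᵢ t)` is the matrix coefficient of `exp (-tT)`, `T` diagonal with entries
`xᵢ`, at the vector with entries `√cᵢ`; by Duhamel's formula its resolvent is a coefficient of the
semigroup generated by a rank one perturbation of `-T`. -/
lemma exists_resolvent_expSum {ι : Type*} [Fintype ι] (c x : ι → ℝ≥0) {l : ℝ} (hl : 0 ≤ l) :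
    ∃ r : ℝ → ℝ, CompletelyMonotoneFn r ∧ Continuous r ∧
      ∀ t, r t = expSum c x t - l * ∫ s in (0 : ℝ)..t, expSum c x (t - s) * r s := by
  let b := EuclideanSpace.basisFun ι ℝ
  let T := ∑ i, (x i : ℝ) • rankOne ℝ (b i) (b i)
  let v := ∑ i, √(c i : ℝ) • b i
  have hcoeff : expSum c x = semigroupCoeff T v := by
    funext t
    rw [semigroupCoeff_sum_rankOne b, expSum]
    simp only [Real.sq_sqrt (NNReal.coe_nonneg _)]
  have hT : T.IsPositive := isPositive_sum _ fun i _ =>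
    (isPositive_rankOne_self (b i)).smul_of_nonneg (x i).coe_nonneg
  have hS : (T + l • rankOne ℝ v v).IsPositive :=
    hT.add ((isPositive_rankOne_self v).smul_of_nonneg hl)
  rw [hcoeff]
  exact ⟨_, completelyMonotoneFn_semigroupCoeff hS v, continuous_semigroupCoeff _ v,
    semigroupCoeff_add_rankOne T v l⟩

section Volterra

open scoped Convolution

lemma convolution_lsmul_comm (f g : ℝ → ℝ) : (f ⋆ g) = (g ⋆ f) := by
  funext x
  rw [convolution_lsmul, convolution_lsmul_swap]
  simp only [smul_eq_mul, mul_comm]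

/-- The functions on `ℝ` that vanish on `(-∞, 0]` and are square integrable on every `(-∞, T]`:
the zero extensions of the elements of `L²_loc(ℝ₊)`. Convolution is a commutative and associative
product on them. -/
structure IsCausalL2Loc (f : ℝ → ℝ) : Prop where
  eq_zero : ∀ x ≤ 0, f x = 0
  memLp : ∀ T, MemLp f 2 (volume.restrict (Iic T))

namespace IsCausalL2Loc

variable {f g h : ℝ → ℝ}

lemma aestronglyMeasurable (hf : IsCausalL2Loc f) : AEStronglyMeasurable f := by
  rw [← Measure.restrict_univ (μ := volume), ← Real.iUnion_Iic_rat]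
  exact AEStronglyMeasurable.iUnion fun q => (hf.memLp q).aestronglyMeasurable

lemma memLp_indicator (hf : IsCausalL2Loc f) (T : ℝ) : MemLp ((Iic T).indicator f) 2 :=
  (memLp_indicator_iff_restrict measurableSet_Iic).2 (hf.memLp T)

lemma add (hf : IsCausalL2Loc f) (hg : IsCausalL2Loc g) : IsCausalL2Loc (f + g) where
  eq_zero x hx := by simp [hf.eq_zero x hx, hg.eq_zero x hx]
  memLp T := (hf.memLp T).add (hg.memLp T)

lemma const_smul (hf : IsCausalL2Loc f) (c : ℝ) : IsCausalL2Loc (c • f) where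
  eq_zero x hx := by simp [hf.eq_zero x hx]
  memLp T := (hf.memLp T).const_smul c

lemma sub (hf : IsCausalL2Loc f) (hg : IsCausalL2Loc g) : IsCausalL2Loc (f - g) := by
  simpa [sub_eq_add_neg] using hf.add (hg.const_smul (-1))

lemma abs (hf : IsCausalL2Loc f) : IsCausalL2Loc |f| where
  eq_zero x hx := by simp [hf.eq_zero x hx]
  memLp T := (hf.memLp T).abs

lemma of_indicator (hm : AEStronglyMeasurable f (volume.restrict (Ioi 0)))
    (hsq : ∀ T > 0, IntervalIntegrable (fun t => f t ^ 2) volume 0 T) :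
    IsCausalL2Loc ((Ioi 0).indicator f) where
  eq_zero x hx := indicator_of_notMem (not_lt.2 hx) f
  memLp T := by
    rw [memLp_indicator_iff_restrict measurableSet_Ioi, Measure.restrict_restrict measurableSet_Ioi,
      Ioi_inter_Iic]
    have hT : (0 : ℝ) < max T 1 := by positivity
    exact ((memLp_two_iff_integrable_sq (hm.mono_set Ioc_subset_Ioi_self)).2
      ((intervalIntegrable_iff_integrableOn_Ioc_of_le hT.le).1 (hsq _ hT))).mono_measure
      (Measure.restrict_mono (Ioc_subset_Ioc_right (le_max_left T 1)) le_rfl)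

lemma mul_sub_eq_indicator (hf : IsCausalL2Loc f) (hg : IsCausalL2Loc g) {x T : ℝ} (hx : x ≤ T)
    (s : ℝ) : f s * g (x - s) = (Iic T).indicator f s * (Iic T).indicator g (x - s) := by
  rcases le_or_gt s 0 with hs | hs
  · simp [indicator, hf.eq_zero s hs]
  · rcases le_or_gt x s with hxs | hxs
    · simp [indicator, hg.eq_zero (x - s) (by linarith)]
    · rw [indicator_of_mem (mem_Iic.2 (by linarith)), indicator_of_mem (mem_Iic.2 (by linarith))]

lemma integrable_mul_sub (hf : IsCausalL2Loc f) (hg : IsCausalL2Loc g) (x : ℝ) :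
    Integrable fun s => f s * g (x - s) := by
  simp only [hf.mul_sub_eq_indicator hg le_rfl]
  exact (hf.memLp_indicator x).integrable_mul
    ((hg.memLp_indicator x).comp_measurePreserving (volume.measurePreserving_sub_left x))

lemma convolution_eq_zero (hf : IsCausalL2Loc f) (hg : IsCausalL2Loc g) {x : ℝ} (hx : x ≤ 0) :
    (f ⋆ g) x = 0 := by
  refine integral_eq_zero_of_ae (ae_of_all _ fun s => ?_)
  rcases le_or_gt s 0 with hs | hs
  · simp [hf.eq_zero s hs]
  · simp [hg.eq_zero (x - s) (by linarith)]

lemma abs_convolution_le (hf : IsCausalL2Loc f) (hg : IsCausalL2Loc g) {x T : ℝ} (hx : x ≤ T) :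
    |(f ⋆ g) x| ≤ ((∫ s, (Iic T).indicator f s ^ 2) + ∫ s, (Iic T).indicator g s ^ 2) / 2 := by
  have hF := (hf.memLp_indicator T).integrable_sq
  have hG := (hg.memLp_indicator T).integrable_sq
  rw [convolution_lsmul, ← Real.norm_eq_abs,
    ← integral_sub_left_eq_self (fun s => (Iic T).indicator g s ^ 2) volume x,
    ← integral_add hF (hG.comp_sub_left x), ← integral_div]
  refine norm_integral_le_of_norm_le ((hF.add (hG.comp_sub_left x)).div_const 2)
    (ae_of_all _ fun s => ?_)
  rw [smul_eq_mul, hf.mul_sub_eq_indicator hg hx, norm_mul, le_div_iff₀ two_pos, mul_comm,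
    ← mul_assoc]
  simpa using two_mul_le_add_sq ‖(Iic T).indicator f s‖ ‖(Iic T).indicator g (x - s)‖

lemma convolution (hf : IsCausalL2Loc f) (hg : IsCausalL2Loc g) : IsCausalL2Loc (f ⋆ g) where
  eq_zero _ hx := hf.convolution_eq_zero hg hx
  memLp T := by
    have hmeas : AEStronglyMeasurable (f ⋆ g) :=
      (hf.aestronglyMeasurable.convolution_integrand (.lsmul ℝ ℝ)
        hg.aestronglyMeasurable).integral_prod_right'
    have hsupp : (f ⋆ g) = (Ioi 0).indicator (f ⋆ g) :=
      (indicator_eq_self.2 fun x hx => not_le.1 fun hx0 => hx (hf.convolution_eq_zero hg hx0)).symm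
    rw [hsupp, memLp_indicator_iff_restrict measurableSet_Ioi,
      Measure.restrict_restrict measurableSet_Ioi, Ioi_inter_Iic]
    exact MemLp.of_bound hmeas.restrict _ <| (ae_restrict_mem measurableSet_Ioc).mono
      fun x hx => hf.abs_convolution_le hg hx.2

lemma convolution_assoc (hf : IsCausalL2Loc f) (hg : IsCausalL2Loc g) (hh : IsCausalL2Loc h) :
    ((f ⋆ g) ⋆ h) = (f ⋆ (g ⋆ h)) := by
  funext x
  refine MeasureTheory.convolution_assoc _ _ _ _ (fun a b c => mul_assoc a b c)
    hf.aestronglyMeasurable hg.aestronglyMeasurable hh.aestronglyMeasurable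
    (ae_of_all _ fun y => hf.integrable_mul_sub hg y)
    (ae_of_all _ fun y => hg.abs.integrable_mul_sub hh.abs y)
    (hf.abs.integrable_mul_sub (hg.abs.convolution hh.abs) x)

lemma sub_convolution (hf : IsCausalL2Loc f) (hg : IsCausalL2Loc g) (hh : IsCausalL2Loc h) :
    ((f - g) ⋆ h) = (f ⋆ h) - (g ⋆ h) := by
  funext x
  simp only [convolution_lsmul, Pi.sub_apply, sub_smul]
  exact integral_sub (hf.integrable_mul_sub hh x) (hg.integrable_mul_sub hh x)

lemma convolution_add (hf : IsCausalL2Loc f) (hg : IsCausalL2Loc g) (hh : IsCausalL2Loc h) :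
    (f ⋆ (g + h)) = (f ⋆ g) + (f ⋆ h) :=
  ConvolutionExists.distrib_add (hf.integrable_mul_sub hg) (hf.integrable_mul_sub hh)

end IsCausalL2Loc

lemma IsCausalL2Loc.of_continuous {f : ℝ → ℝ} (hf : Continuous f) :
    IsCausalL2Loc ((Ioi 0).indicator f) :=
  .of_indicator hf.aestronglyMeasurable fun T _ => (hf.pow 2).intervalIntegrable 0 T

lemma convolution_indicator_Ioi (f g : ℝ → ℝ) {t : ℝ} (ht : 0 < t) :
    ((Ioi 0).indicator f ⋆ (Ioi 0).indicator g) t = ∫ s in (0 : ℝ)..t, f (t - s) * g s := by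
  rw [convolution_lsmul_comm, ← posConvolution_eq_convolution_indicator g f _ volume,
    posConvolution, indicator_of_mem (mem_Ioi.2 ht)]
  simp only [ContinuousLinearMap.lsmul_apply, smul_eq_mul, mul_comm]

/-- `r` is the resolvent of the kernel `k` at the parameter `l`: it solves the Volterra equation
`r = k - l k ⋆ r` on the whole line. -/
def IsVolterraResolvent (l : ℝ) (k r : ℝ → ℝ) : Prop :=
  r = k - l • (k ⋆ r)

lemma isVolterraResolvent_indicator {l : ℝ} {k r : ℝ → ℝ}
    (h : ∀ t > 0, r t = k t - l * ∫ s in (0 : ℝ)..t, k (t - s) * r s)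
    (hk : IsCausalL2Loc ((Ioi 0).indicator k)) (hr : IsCausalL2Loc ((Ioi 0).indicator r)) :
    IsVolterraResolvent l ((Ioi 0).indicator k) ((Ioi 0).indicator r) := by
  funext t
  rw [Pi.sub_apply, Pi.smul_apply, smul_eq_mul]
  rcases le_or_gt t 0 with ht | ht
  · rw [hr.eq_zero t ht, hk.eq_zero t ht, hk.convolution_eq_zero hr ht, mul_zero, sub_zero]
  · rw [convolution_indicator_Ioi k r ht, indicator_of_mem (mem_Ioi.2 ht),
      indicator_of_mem (mem_Ioi.2 ht), h t ht]

namespace IsVolterraResolvent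

variable {l m : ℝ} {k r K E : ℝ → ℝ}

lemma convolution_eq {f : ℝ → ℝ} (h : IsVolterraResolvent l k r) (hkL : IsCausalL2Loc k)
    (hr : IsCausalL2Loc r) (hf : IsCausalL2Loc f) :
    (r ⋆ f) = (k ⋆ f) - l • (k ⋆ (r ⋆ f)) := by
  have := hkL.sub_convolution ((hkL.convolution hr).const_smul l) hf
  rwa [← show r = k - l • (k ⋆ r) from h, smul_convolution, hkL.convolution_assoc hr hf] at this

/- Both the parameter and the kernel vary: `r` and `E` are compared by expanding `r ⋆ E` once with
each of the two equations. -/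
lemma sub_eq (hr : IsVolterraResolvent l k r) (hE : IsVolterraResolvent m K E)
    (hkL : IsCausalL2Loc k) (hrL : IsCausalL2Loc r) (hKL : IsCausalL2Loc K)
    (hEL : IsCausalL2Loc E) :
    E - r = (l - m) • (r ⋆ E) + (K - k) - ((K - k) ⋆ (m • E + l • r - (l * m) • (r ⋆ E))) := by
  have hrE := hrL.convolution hEL
  have hg := hKL.sub hkL
  have h₁ := hr.convolution_eq hkL hrL hEL
  have h₂ := hE.convolution_eq hKL hEL hrL
  rw [convolution_lsmul_comm E r] at h₂
  rw [sub_eq_add_neg _ ((l * m) • (r ⋆ E)), ← neg_smul,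
    hg.convolution_add ((hEL.const_smul m).add (hrL.const_smul l)) (hrE.const_smul _),
    hg.convolution_add (hEL.const_smul m) (hrL.const_smul l), convolution_smul, convolution_smul,
    convolution_smul, hKL.sub_convolution hkL hEL, hKL.sub_convolution hkL hrL,
    hKL.sub_convolution hkL hrE]
  funext x
  have hr₀ := congrFun hr x
  have hE₀ := congrFun hE x
  replace h₁ := congrFun h₁ x
  replace h₂ := congrFun h₂ x
  simp only [Pi.sub_apply, Pi.add_apply, Pi.smul_apply, smul_eq_mul] at *
  linear_combination hE₀ - hr₀ + m * h₁ - l * h₂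

lemma le_of_le (hr : IsVolterraResolvent l K r) (hE : IsVolterraResolvent m K E)
    (hKL : IsCausalL2Loc K) (hrL : IsCausalL2Loc r) (hEL : IsCausalL2Loc E) (hr₀ : 0 ≤ r)
    (hE₀ : 0 ≤ E) (hlm : l ≤ m) : E ≤ r := by
  have h := hr.sub_eq hE hKL hrL hKL hEL
  rw [sub_self, zero_convolution, add_zero, sub_zero] at h
  refine sub_nonpos.1 (h.trans_le fun x => ?_)
  exact mul_nonpos_of_nonpos_of_nonneg (sub_nonpos.2 hlm)
    (integral_nonneg fun s => mul_nonneg (hr₀ s) (hE₀ _))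

lemma le_kernel (h : IsVolterraResolvent l k r) (hl : 0 ≤ l) (hk : 0 ≤ k) (hr : 0 ≤ r) :
    r ≤ k := by
  rw [h]
  exact sub_le_self _ fun x => mul_nonneg hl
    (integral_nonneg fun s => mul_nonneg (hk s) (hr _))

end IsVolterraResolvent

lemma IsCausalL2Loc.abs_mul_sub_le {f g P Q : ℝ → ℝ} {x : ℝ} (hf : IsCausalL2Loc f)
    (hg : IsCausalL2Loc g) (hP : IsCausalL2Loc P) (hQ : IsCausalL2Loc Q)
    (hfP : ∀ s ≤ x, |f s| ≤ P s) (hgQ : ∀ s ≤ x, |g s| ≤ Q s) (s : ℝ) :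
    |f s * g (x - s)| ≤ P s * Q (x - s) := by
  rcases le_or_gt s 0 with hs | hs
  · simp [hf.eq_zero s hs, hP.eq_zero s hs]
  · rcases le_or_gt x s with hxs | hxs
    · simp [hg.eq_zero (x - s) (by linarith), hQ.eq_zero (x - s) (by linarith)]
    · rw [abs_mul]
      exact mul_le_mul (hfP s hxs.le) (hgQ _ (by linarith)) (abs_nonneg _)
        ((abs_nonneg _).trans (hfP s hxs.le))

lemma IsCausalL2Loc.abs_convolution_le_convolution {f g P Q : ℝ → ℝ} {x : ℝ}
    (hf : IsCausalL2Loc f) (hg : IsCausalL2Loc g) (hP : IsCausalL2Loc P) (hQ : IsCausalL2Loc Q)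
    (hfP : ∀ s ≤ x, |f s| ≤ P s) (hgQ : ∀ s ≤ x, |g s| ≤ Q s) : |(f ⋆ g) x| ≤ (P ⋆ Q) x := by
  rw [convolution_lsmul, ← Real.norm_eq_abs]
  exact norm_integral_le_of_norm_le (hP.integrable_mul_sub hQ x)
    (ae_of_all _ (hf.abs_mul_sub_le hg hP hQ hfP hgQ))

lemma IsCausalL2Loc.tendsto_convolution_zero {g u : ℕ → ℝ → ℝ} {P Q : ℝ → ℝ} {x : ℝ}
    (hg : ∀ n, IsCausalL2Loc (g n)) (hu : ∀ n, IsCausalL2Loc (u n)) (hP : IsCausalL2Loc P)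
    (hQ : IsCausalL2Loc Q) (hgP : ∀ᶠ n in atTop, ∀ s ≤ x, |g n s| ≤ P s)
    (huQ : ∀ᶠ n in atTop, ∀ s ≤ x, |u n s| ≤ Q s)
    (hlim : ∀ s, Tendsto (fun n => g n s) atTop (𝓝 0)) :
    Tendsto (fun n => (g n ⋆ u n) x) atTop (𝓝 0) := by
  rw [← integral_zero ℝ ℝ (μ := volume)]
  refine tendsto_integral_filter_of_dominated_convergence (fun s => P s * Q (x - s))
    (Eventually.of_forall fun n => ((hg n).integrable_mul_sub (hu n) x).aestronglyMeasurable) ?_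
    (hP.integrable_mul_sub hQ x) (ae_of_all _ fun s => ?_)
  · filter_upwards [hgP, huQ] with n hn₁ hn₂
    exact ae_of_all _ ((hg n).abs_mul_sub_le (hu n) hP hQ hn₁ hn₂)
  · rcases le_or_gt s 0 with hs | hs
    · simp [(hg _).eq_zero s hs]
    · refine squeeze_zero_norm' (huQ.mono fun n hn => ?_)
        (by simpa using (hlim s).abs.mul_const (Q (x - s)))
      rw [ContinuousLinearMap.lsmul_apply, smul_eq_mul, norm_mul]
      exact mul_le_mul_of_nonneg_left (hn _ (by linarith)) (norm_nonneg _)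

lemma IsVolterraResolvent.tendsto {l : ℝ} {k r : ℕ → ℝ → ℝ} {K E P : ℝ → ℝ} {x : ℝ}
    (hr : ∀ n, IsVolterraResolvent l (k n) (r n)) (hE : IsVolterraResolvent l K E)
    (hkL : ∀ n, IsCausalL2Loc (k n)) (hrL : ∀ n, IsCausalL2Loc (r n)) (hKL : IsCausalL2Loc K)
    (hEL : IsCausalL2Loc E) (hP : IsCausalL2Loc P) (hkP : ∀ᶠ n in atTop, ∀ s ≤ x, |k n s| ≤ P s)
    (hrP : ∀ᶠ n in atTop, ∀ s ≤ x, |r n s| ≤ P s)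
    (hlim : ∀ s, Tendsto (fun n => k n s) atTop (𝓝 (K s))) :
    Tendsto (fun n => r n x) atTop (𝓝 (E x)) := by
  have hg₀ (s : ℝ) : Tendsto (fun n => (K - k n) s) atTop (𝓝 0) := by
    simpa using (hlim s).const_sub (K s)
  have hrE (n : ℕ) := (hrL n).convolution hEL
  have hconv := IsCausalL2Loc.tendsto_convolution_zero (x := x)
    (u := fun n => l • E + l • r n - (l * l) • (r n ⋆ E)) (P := |K| + P)
    (Q := |l| • |E| + |l| • P + |l * l| • (P ⋆ |E|)) (fun n => hKL.sub (hkL n))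
    (fun n => ((hEL.const_smul l).add ((hrL n).const_smul l)).sub ((hrE n).const_smul _))
    (hKL.abs.add hP) (((hEL.abs.const_smul _).add (hP.const_smul _)).add
      ((hP.convolution hEL.abs).const_smul _))
    (hkP.mono fun n hn s hs => (abs_sub _ _).trans (add_le_add le_rfl (hn s hs)))
    (hrP.mono fun n hn s hs => ?_) hg₀
  · have hdiff (n : ℕ) := (hr n).sub_eq hE (hkL n) (hrL n) hKL hEL
    have := ((hg₀ x).sub hconv).const_sub (E x)
    simp only [sub_zero] at this
    refine this.congr fun n => ?_
    have := congrFun (hdiff n) x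
    simp only [sub_self, zero_smul, zero_add, Pi.sub_apply] at this ⊢
    linarith
  · have hrE_le := (hrL n).abs_convolution_le_convolution hEL hP hEL.abs
      (fun y hy => hn y (hy.trans hs)) (fun _ _ => le_rfl)
    refine (abs_sub _ _).trans (add_le_add ((abs_add_le _ _).trans (add_le_add ?_ ?_)) ?_) <;>
      simp only [Pi.smul_apply, Pi.abs_apply, smul_eq_mul, abs_mul l, abs_mul (l * l)] <;> gcongr
    exact hn s hs

lemma IsVolterraResolvent.completelyMonotoneFn {l : ℝ} {K E : ℝ → ℝ}
    (h : IsVolterraResolvent l ((Ioi 0).indicator K) ((Ioi 0).indicator E)) (hl : 0 ≤ l)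
    (hKL : IsCausalL2Loc ((Ioi 0).indicator K)) (hEL : IsCausalL2Loc ((Ioi 0).indicator E))
    (hcm : CompletelyMonotoneFn K) : CompletelyMonotoneFn E := by
  obtain ⟨N, c, x, hle, hlim⟩ := hcm.exists_seq_expSum_tendsto
  choose r hrcm hrcont hr using fun n => exists_resolvent_expSum (c n) (x n) hl
  set k := fun n => expSum (c n) (x n)
  have hkL (n : ℕ) := IsCausalL2Loc.of_continuous (continuous_expSum (c n) (x n))
  have hrL (n : ℕ) := IsCausalL2Loc.of_continuous (hrcont n)
  have hres (n : ℕ) := isVolterraResolvent_indicator (fun t _ => hr n t) (hkL n) (hrL n)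
  have hP : IsCausalL2Loc ((Ioi 0).indicator (K + 1)) := by
    rw [indicator_add']
    exact hKL.add (.of_continuous continuous_one)
  have hk₀ (n : ℕ) : 0 ≤ (Ioi 0).indicator (k n) :=
    indicator_nonneg fun t _ => expSum_nonneg (c n) (x n) t
  have hr₀ (n : ℕ) : 0 ≤ (Ioi 0).indicator (r n) := indicator_nonneg fun t ht => (hrcm n).nonneg ht
  have hkP (t : ℝ) : ∀ᶠ n : ℕ in atTop, ∀ s ≤ t,
      (Ioi 0).indicator (k n) s ≤ (Ioi 0).indicator (K + 1) s := by
    filter_upwards [eventually_ge_atTop ⌈t⌉₊] with n hn s hs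
    exact indicator_le_indicator' fun hs₀ => hle n s ⟨hs₀, hs.trans (Nat.ceil_le.1 hn)⟩
  refine .of_tendsto (l := atTop) hrcm fun t ht => ?_
  have := h.tendsto (x := t) hres hkL hrL hKL hEL hP ?_ ?_ fun s => ?_
  · simpa [indicator, ht] using this
  · exact (hkP t).mono fun n hn s hs => (abs_of_nonneg (hk₀ n s)).trans_le (hn s hs)
  · exact (hkP t).mono fun n hn s hs => (abs_of_nonneg (hr₀ n s)).trans_le
      (((hres n).le_kernel hl (hk₀ n) (hr₀ n) s).trans (hn s hs))
  · by_cases hs : 0 < s <;> simp [indicator, hs, hlim]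

end Volterra

section Measurability

lemma countable_diff_biUnion_Ioo_sub (A : Set ℝ) {c : ℝ} (hc : 0 < c) :
    (A \ ⋃ t ∈ A, Ioo (t - c) t).Countable := by
  refine (countable_setOfPred_isolated_right_within (s := A)).mono ?_
  rintro t ⟨htA, htU⟩
  refine ⟨htA, empty_mem_iff_bot.1 <| mem_nhdsWithin.2
    ⟨Iio (t + c), isOpen_Iio, by simpa using hc, ?_⟩⟩
  rintro u ⟨hu, huA, htu⟩
  exact htU (mem_biUnion huA ⟨sub_lt_iff_lt_add.2 hu, htu⟩)

lemma aestronglyMeasurable_of_eqOn_compl {f g : ℝ → ℝ} {A : Set ℝ} {c : ℝ} (hc : 0 < c)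
    (hf : ∀ t ∈ A, AEStronglyMeasurable f (volume.restrict (Ioo (t - c) t)))
    (hg : AEStronglyMeasurable g) (hfg : EqOn f g Aᶜ) : AEStronglyMeasurable f := by
  obtain ⟨S, hSA, hS, hSU⟩ := TopologicalSpace.isOpen_biUnion_countable A
    (fun t => Ioo (t - c) t) fun _ _ => isOpen_Ioo
  have hcount := countable_diff_biUnion_Ioo_sub A hc
  rw [← hSU] at hcount
  set U := ⋃ t ∈ S, Ioo (t - c) t with hU
  have hUmeas : MeasurableSet U := (isOpen_biUnion fun _ _ => isOpen_Ioo).measurableSet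
  have hfU : AEStronglyMeasurable f (volume.restrict U) := by
    have := hS.to_subtype
    rw [hU, biUnion_eq_iUnion]
    exact AEStronglyMeasurable.iUnion fun t => hf t (hSA t.2)
  have hfUc : AEStronglyMeasurable f (volume.restrict Uᶜ) := by
    refine hg.restrict.congr ?_
    filter_upwards [ae_restrict_mem hUmeas.compl,
      ae_restrict_of_ae (hcount.ae_notMem volume)] with t htU htA
    exact (hfg fun h => htA ⟨h, htU⟩).symm
  rw [← Measure.restrict_univ (μ := volume), ← union_compl_self U]
  exact aestronglyMeasurable_union_iff.2 ⟨hfU, hfUc⟩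

lemma aestronglyMeasurable_of_intervalIntegrable_comp_sub_mul {K f : ℝ → ℝ} {c t : ℝ}
    (hK : ContinuousOn K (Ioi 0)) (hpos : ∀ s ∈ Ioc 0 c, 0 < K s) (ht : 0 < t)
    (hint : IntervalIntegrable (fun s => K (t - s) * f s) volume 0 t) :
    AEStronglyMeasurable f (volume.restrict (Ioo (max (t - c) 0) t)) := by
  have hmem : ∀ s ∈ Ioo (max (t - c) 0) t, t - s ∈ Ioc 0 c := fun s hs =>
    ⟨sub_pos.2 hs.2, by linarith [(le_max_left _ _).trans_lt hs.1]⟩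
  have hprod := ((intervalIntegrable_iff_integrableOn_Ioo_of_le ht.le).1
    hint).aestronglyMeasurable.mono_set (Ioo_subset_Ioo_left (le_max_right (t - c) 0))
  have hinv : ContinuousOn (fun s => (K (t - s))⁻¹) (Ioo (max (t - c) 0) t) :=
    (hK.comp (by fun_prop) fun s hs => (hmem s hs).1).inv₀ fun s hs => (hpos _ (hmem s hs)).ne'
  refine ((hinv.aestronglyMeasurable measurableSet_Ioo).mul hprod).congr ?_
  filter_upwards [ae_restrict_mem measurableSet_Ioo] with s hs
  exact inv_mul_cancel_left₀ (hpos _ (hmem s hs)).ne' (f s)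

namespace SolvesResolventEq

variable {K E : ℝ → ℝ} {β : ℝ}

/- Where the integrand is integrable, dividing by the kernel recovers `E` just to the left; where it
is not, the integral has the junk value `0` and `E = K`. -/
lemma aestronglyMeasurable (h : SolvesResolventEq K β E) (hβ : β ≠ 0)
    (hK : CompletelyMonotoneFn K) : AEStronglyMeasurable E (volume.restrict (Ioi 0)) := by
  have hKm : AEStronglyMeasurable K (volume.restrict (Ioi 0)) :=
    hK.continuousOn.aestronglyMeasurable measurableSet_Ioi
  by_cases hzero : ∀ t > 0, K t = 0
  · refine hKm.congr (ae_restrict_of_forall_mem measurableSet_Ioi fun t ht => ?_)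
    rw [h.2 t ht, intervalIntegral.integral_of_le (le_of_lt ht), integral_Ioc_eq_integral_Ioo,
      setIntegral_eq_zero_of_forall_eq_zero fun s hs => ?_, add_zero]
    rw [hzero _ (sub_pos.2 hs.2), zero_mul]
  push Not at hzero
  obtain ⟨c, hc, hKc⟩ := hzero
  have hpos : ∀ s ∈ Ioc 0 c, 0 < K s := fun s hs =>
    ((hK.nonneg hc).lt_of_ne' hKc).trans_le (hK.antitoneOn hs.1 hc hs.2)
  rw [← aestronglyMeasurable_indicator_iff measurableSet_Ioi] at hKm ⊢
  refine aestronglyMeasurable_of_eqOn_compl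
    (A := {t | 0 < t ∧ IntervalIntegrable (fun s => K (t - s) * (β * E s)) volume 0 t}) hc
    (fun t ht => ?_) hKm fun t ht => ?_
  · rw [aestronglyMeasurable_indicator_iff measurableSet_Ioi,
      Measure.restrict_restrict measurableSet_Ioi, inter_comm, Ioo_inter_Ioi]
    have := aestronglyMeasurable_of_intervalIntegrable_comp_sub_mul hK.continuousOn hpos ht.1 ht.2
    exact (aestronglyMeasurable_const_smul_iff₀ hβ).1 this
  · by_cases ht₀ : t ∈ Ioi 0
    · rw [indicator_of_mem ht₀, indicator_of_mem ht₀, h.2 t ht₀,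
        intervalIntegral.integral_undef fun hint => ht ⟨ht₀, hint⟩, add_zero]
    · rw [indicator_of_notMem ht₀, indicator_of_notMem ht₀]

end SolvesResolventEq

end Measurability

section Integral
open scoped Convolution

lemma IsCausalL2Loc.integrableOn_Iic {f : ℝ → ℝ} (hf : IsCausalL2Loc f) (T : ℝ) :
    IntegrableOn f (Iic T) := by
  have hsupp : f = (Ioi 0).indicator f :=
    (indicator_eq_self.2 fun x hx => not_le.1 fun hx₀ => hx (hf.eq_zero x hx₀)).symm
  rw [hsupp, IntegrableOn, integrable_indicator_iff measurableSet_Ioi, IntegrableOn,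
    Measure.restrict_restrict measurableSet_Ioi, Ioi_inter_Iic]
  exact ((hf.memLp T).mono_measure
    (Measure.restrict_mono Ioc_subset_Iic_self le_rfl)).integrable one_le_two

lemma IsCausalL2Loc.integrable_exp_neg_mul {K : ℝ → ℝ} (hKL : IsCausalL2Loc ((Ioi 0).indicator K))
    (hK : AntitoneOn K (Ioi 0)) (hK₀ : ∀ t, 0 < t → 0 ≤ K t) {a : ℝ} (ha : 0 < a) :
    Integrable fun t => Real.exp (-a * t) * (Ioi 0).indicator K t := by
  have hmeas : AEStronglyMeasurable fun t => Real.exp (-a * t) * (Ioi 0).indicator K t :=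
    (by fun_prop : Continuous fun t => Real.exp (-a * t)).aestronglyMeasurable.mul
      hKL.aestronglyMeasurable
  rw [← integrableOn_univ, ← Iic_union_Ioi (a := (1 : ℝ))]
  refine IntegrableOn.union ?_ ?_
  · refine Integrable.mono (hKL.integrableOn_Iic 1) hmeas.restrict (ae_of_all _ fun t => ?_)
    rcases le_or_gt t 0 with ht | ht
    · simp [hKL.eq_zero t ht]
    · rw [norm_mul, Real.norm_of_nonneg (Real.exp_nonneg _)]
      exact mul_le_of_le_one_left (norm_nonneg _) (Real.exp_le_one_iff.2 (by nlinarith))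
  · refine ((integrableOn_exp_mul_Ioi (neg_neg_of_pos ha) 1).mul_const (K 1)).mono'
      hmeas.restrict (ae_restrict_of_forall_mem measurableSet_Ioi fun t ht => ?_)
    have ht₀ : (0 : ℝ) < t := one_pos.trans ht
    rw [indicator_of_mem (mem_Ioi.2 ht₀), norm_mul, Real.norm_of_nonneg (Real.exp_nonneg _),
      Real.norm_of_nonneg (hK₀ t ht₀)]
    exact mul_le_mul_of_nonneg_left (hK (mem_Ioi.2 one_pos) ht₀ (le_of_lt ht)) (Real.exp_nonneg _)

lemma tendsto_lintegral_exp_neg_mul {f : ℝ → ℝ} (hf : AEStronglyMeasurable f)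
    (hf_zero : ∀ x ≤ 0, f x = 0) (hf₀ : 0 ≤ f) :
    Tendsto (fun n : ℕ => ∫⁻ x, ENNReal.ofReal (Real.exp (-(1 / ((n : ℝ) + 1)) * x) * f x)) atTop
      (𝓝 (∫⁻ x, ENNReal.ofReal (f x))) := by
  refine lintegral_tendsto_of_tendsto_of_monotone (fun n => ?_) (ae_of_all _ fun x => ?_)
    (ae_of_all _ fun x => ENNReal.tendsto_ofReal ?_)
  · exact ((by fun_prop : Continuous fun x : ℝ => Real.exp (-(1 / ((n : ℝ) + 1)) *
      x)).aestronglyMeasurable.mul hf).aemeasurable.ennreal_ofReal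
  · intro m n hmn
    refine ENNReal.ofReal_le_ofReal ?_
    rcases le_or_gt x 0 with hx | hx
    · simp [hf_zero x hx]
    · have : 0 ≤ f x := hf₀ x
      gcongr
  · have := tendsto_one_div_add_atTop_nhds_zero_nat (𝕜 := ℝ)
    simpa using ((Real.continuous_exp.tendsto _).comp (this.neg.mul_const x)).mul_const (f x)

lemma ofReal_eq_inv_inv_add_ofReal {κ l I : ℝ} (hκ : 0 ≤ κ) (hl : 0 ≤ l)
    (h : I = κ - l * (κ * I)) :
    ENNReal.ofReal I = ((ENNReal.ofReal κ)⁻¹ + ENNReal.ofReal l)⁻¹ := by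
  rcases hκ.eq_or_lt with rfl | hκ
  · simpa using h.le
  · rw [← ENNReal.ofReal_inv_of_pos hκ, ← ENNReal.ofReal_add (by positivity) hl,
      ← ENNReal.ofReal_inv_of_pos (by positivity)]
    congr 1
    field_simp
    linarith

namespace IsVolterraResolvent

variable {l : ℝ} {k r : ℝ → ℝ}

lemma exp_mul (h : IsVolterraResolvent l k r) (a : ℝ) :
    IsVolterraResolvent l (fun x => Real.exp (a * x) * k x) fun x => Real.exp (a * x) * r x := by
  have hconv (x : ℝ) : ((fun x => Real.exp (a * x) * k x) ⋆ fun x => Real.exp (a * x) * r x) x =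
      Real.exp (a * x) * (k ⋆ r) x := by
    rw [convolution_lsmul, convolution_lsmul, ← integral_const_mul]
    refine integral_congr_ae (ae_of_all _ fun s => ?_)
    have : Real.exp (a * x) = Real.exp (a * s) * Real.exp (a * (x - s)) := by
      rw [← Real.exp_add]
      ring_nf
    simp only [smul_eq_mul, this]
    ring
  funext x
  have hx := congrFun h x
  simp only [Pi.sub_apply, Pi.smul_apply, smul_eq_mul, hconv] at hx ⊢
  linear_combination Real.exp (a * x) * hx

lemma lintegral_eq_of_integrable (h : IsVolterraResolvent l k r) (hl : 0 ≤ l) (hk₀ : 0 ≤ k)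
    (hr₀ : 0 ≤ r) (hk : Integrable k) (hr : AEStronglyMeasurable r) :
    ∫⁻ x, ENNReal.ofReal (r x) =
      ((∫⁻ x, ENNReal.ofReal (k x))⁻¹ + ENNReal.ofReal l)⁻¹ := by
  have hr : Integrable r := hk.mono' hr <| ae_of_all _ fun x =>
    (Real.norm_of_nonneg (hr₀ x)).trans_le (h.le_kernel hl hk₀ hr₀ x)
  rw [← ofReal_integral_eq_lintegral_ofReal hr (ae_of_all _ hr₀),
    ← ofReal_integral_eq_lintegral_ofReal hk (ae_of_all _ hk₀)]
  refine ofReal_eq_inv_inv_add_ofReal (integral_nonneg hk₀) hl ?_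
  calc ∫ x, r x = ∫ x, (k - l • (k ⋆ r)) x := integral_congr_ae (ae_of_all _ (congrFun h))
    _ = (∫ x, k x) - l * ∫ x, (k ⋆ r) x := by
      rw [← integral_const_mul]
      exact integral_sub hk ((hk.integrable_convolution _ hr).const_mul l)
    _ = (∫ x, k x) - l * ((∫ x, k x) * ∫ x, r x) := by
      rw [integral_convolution _ hk hr]
      rfl

/- Multiplication by `exp (-a x)` preserves the resolvent equation and makes the kernel integrable;
monotone convergence as `a → 0` then covers the case of infinite mass. -/
lemma lintegral_eq (h : IsVolterraResolvent l k r) (hl : 0 ≤ l) (hk₀ : 0 ≤ k) (hr₀ : 0 ≤ r)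
    (hkL : IsCausalL2Loc k) (hrL : IsCausalL2Loc r)
    (hk : ∀ a > 0, Integrable fun x => Real.exp (-a * x) * k x) :
    ∫⁻ x, ENNReal.ofReal (r x) =
      ((∫⁻ x, ENNReal.ofReal (k x))⁻¹ + ENNReal.ofReal l)⁻¹ := by
  have hlim := tendsto_lintegral_exp_neg_mul hkL.aestronglyMeasurable hkL.eq_zero hk₀
  refine tendsto_nhds_unique
    (tendsto_lintegral_exp_neg_mul hrL.aestronglyMeasurable hrL.eq_zero hr₀)
    (((hlim.inv.add_const _).inv).congr fun n => Eq.symm ?_)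
  exact (h.exp_mul _).lintegral_eq_of_integrable hl
    (fun x => mul_nonneg (Real.exp_nonneg _) (hk₀ x))
    (fun x => mul_nonneg (Real.exp_nonneg _) (hr₀ x)) (hk _ (by positivity))
    ((by fun_prop : Continuous fun x : ℝ => Real.exp (-(1 / ((n : ℝ) + 1)) *
      x)).aestronglyMeasurable.mul hrL.aestronglyMeasurable)

end IsVolterraResolvent

end Integral

lemma tendsto_setIntegral_Ioi_atTop_zero {f : ℝ → ℝ} {a : ℝ} (hf : IntegrableOn f (Ioi a)) :
    Tendsto (fun t => ∫ x in Ioi t, f x) atTop (𝓝 0) := by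
  have iInter_Ioi_eq : ⋂ t : ℝ, Ioi t = ∅ := iInter_eq_empty_iff.2 fun x => ⟨x, lt_irrefl x⟩
  simpa [iInter_Ioi_eq] using tendsto_setIntegral_of_antitone (fun _ => measurableSet_Ioi)
    (fun _ _ => Ioi_subset_Ioi) ⟨a, hf⟩

namespace SolvesResolventEq

variable {K E E' : ℝ → ℝ} {α β : ℝ}

lemma isCausalL2Loc (h : SolvesResolventEq K β E) (hβ : β ≠ 0) (hcm : CompletelyMonotoneFn K) :
    IsCausalL2Loc ((Ioi 0).indicator E) :=
  .of_indicator (h.aestronglyMeasurable hβ hcm) h.1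

lemma isVolterraResolvent (h : SolvesResolventEq K β E) (hβ : β ≠ 0) (hcm : CompletelyMonotoneFn K)
    (hKL : IsCausalL2Loc ((Ioi 0).indicator K)) :
    IsVolterraResolvent (-β) ((Ioi 0).indicator K) ((Ioi 0).indicator E) := by
  refine isVolterraResolvent_indicator (fun t ht => ?_) hKL (h.isCausalL2Loc hβ hcm)
  simp only [h.2 t ht, mul_left_comm _ β, intervalIntegral.integral_const_mul, neg_mul,
    sub_neg_eq_add]

lemma completelyMonotoneFn (h : SolvesResolventEq K β E) (hβ : β < 0)
    (hcm : CompletelyMonotoneFn K) (hKL : IsCausalL2Loc ((Ioi 0).indicator K)) :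
    CompletelyMonotoneFn E :=
  (h.isVolterraResolvent hβ.ne hcm hKL).completelyMonotoneFn (neg_nonneg.2 hβ.le) hKL
    (h.isCausalL2Loc hβ.ne hcm) hcm

lemma lintegral_eq (h : SolvesResolventEq K β E) (hβ : β < 0) (hcm : CompletelyMonotoneFn K)
    (hKL : IsCausalL2Loc ((Ioi 0).indicator K)) :
    ∫⁻ t in Ioi 0, ENNReal.ofReal (E t) = ((normL1 K)⁻¹ + ENNReal.ofReal |β|)⁻¹ := by
  have lintegral_indicator_eq (f : ℝ → ℝ) :
      ∫⁻ t, ENNReal.ofReal ((Ioi 0).indicator f t) = ∫⁻ t in Ioi 0, ENNReal.ofReal (f t) := by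
    rw [← lintegral_indicator measurableSet_Ioi]
    simp only [indicator_apply, apply_ite ENNReal.ofReal, ENNReal.ofReal_zero]
  have hEcm := h.completelyMonotoneFn hβ hcm hKL
  have := (h.isVolterraResolvent hβ.ne hcm hKL).lintegral_eq (neg_nonneg.2 hβ.le)
    (indicator_nonneg fun t ht => hcm.nonneg ht) (indicator_nonneg fun t ht => hEcm.nonneg ht) hKL
    (h.isCausalL2Loc hβ.ne hcm)
    fun a ha => hKL.integrable_exp_neg_mul hcm.antitoneOn (fun t => hcm.nonneg) ha
  rwa [lintegral_indicator_eq, lintegral_indicator_eq, ← abs_of_neg hβ] at this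

lemma integrableOn (h : SolvesResolventEq K β E) (hβ : β < 0) (hcm : CompletelyMonotoneFn K)
    (hKL : IsCausalL2Loc ((Ioi 0).indicator K)) : IntegrableOn E (Ioi 0) := by
  refine ⟨h.aestronglyMeasurable hβ.ne hcm, ?_⟩
  rw [hasFiniteIntegral_iff_ofReal (ae_restrict_of_forall_mem measurableSet_Ioi fun t ht =>
    (h.completelyMonotoneFn hβ hcm hKL).nonneg ht), h.lintegral_eq hβ hcm hKL, ENNReal.inv_lt_top]
  exact (ENNReal.ofReal_pos.2 (abs_pos_of_neg hβ)).trans_le le_add_self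

lemma integral_eq (h : SolvesResolventEq K β E) (hβ : β < 0) (hcm : CompletelyMonotoneFn K)
    (hKL : IsCausalL2Loc ((Ioi 0).indicator K)) :
    ∫ t in Ioi 0, E t = (((normL1 K)⁻¹ + ENNReal.ofReal |β|)⁻¹).toReal := by
  rw [← h.lintegral_eq hβ hcm hKL]
  exact integral_eq_lintegral_of_nonneg_ae (ae_restrict_of_forall_mem measurableSet_Ioi fun t ht =>
    (h.completelyMonotoneFn hβ hcm hKL).nonneg ht) (h.aestronglyMeasurable hβ.ne hcm)

lemma integrableOn_sq (h : SolvesResolventEq K β E) (hβ : β < 0) (hcm : CompletelyMonotoneFn K)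
    (hKL : IsCausalL2Loc ((Ioi 0).indicator K)) : IntegrableOn (fun t => E t ^ 2) (Ioi 0) := by
  have hEcm := h.completelyMonotoneFn hβ hcm hKL
  have hsub : Ioi (1 : ℝ) ⊆ Ioi 0 := Ioi_subset_Ioi zero_le_one
  rw [← Ioc_union_Ioi_eq_Ioi (zero_le_one' ℝ)]
  refine ((intervalIntegrable_iff_integrableOn_Ioc_of_le zero_le_one).1 (h.1 1 one_pos)).union ?_
  refine (((h.integrableOn hβ hcm hKL).mono_set hsub).const_mul (E 1)).mono'
    (((hEcm.continuousOn.pow 2).mono hsub).aestronglyMeasurable measurableSet_Ioi)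
    (ae_restrict_of_forall_mem measurableSet_Ioi fun t ht => ?_)
  rw [Real.norm_of_nonneg (sq_nonneg _), sq]
  exact mul_le_mul_of_nonneg_right
    (hEcm.antitoneOn (mem_Ioi.2 one_pos) (hsub ht) (le_of_lt ht)) (hEcm.nonneg (hsub ht))

lemma le_of_le (h : SolvesResolventEq K α E) (h' : SolvesResolventEq K β E') (hα : α < 0)
    (hβα : β ≤ α) (hcm : CompletelyMonotoneFn K) (hKL : IsCausalL2Loc ((Ioi 0).indicator K))
    {t : ℝ} (ht : 0 < t) : E' t ≤ E t := by
  have hβ := hβα.trans_lt hα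
  have := (h.isVolterraResolvent hα.ne hcm hKL).le_of_le (h'.isVolterraResolvent hβ.ne hcm hKL)
    hKL (h.isCausalL2Loc hα.ne hcm) (h'.isCausalL2Loc hβ.ne hcm)
    (indicator_nonneg fun s hs => (h.completelyMonotoneFn hα hcm hKL).nonneg hs)
    (indicator_nonneg fun s hs => (h'.completelyMonotoneFn hβ hcm hKL).nonneg hs)
    (neg_le_neg hβα) t
  rwa [indicator_of_mem (mem_Ioi.2 ht), indicator_of_mem (mem_Ioi.2 ht)] at this

lemma setIntegral_Ioi_add_sq_le_of_le (h : SolvesResolventEq K α E) (h' : SolvesResolventEq K β E')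
    (hα : α < 0) (hβα : β ≤ α) (hcm : CompletelyMonotoneFn K)
    (hKL : IsCausalL2Loc ((Ioi 0).indicator K)) {t : ℝ} (ht : 0 ≤ t) :
    (∫ r in Ioi t, E' r) + (∫ r in Ioi t, E' r ^ 2) ≤
      (∫ r in Ioi t, E r) + ∫ r in Ioi t, E r ^ 2 := by
  have hβ := hβα.trans_lt hα
  have hsub : Ioi t ⊆ Ioi 0 := Ioi_subset_Ioi ht
  have hle : ∀ r ∈ Ioi t, E' r ≤ E r := fun r hr => h.le_of_le h' hα hβα hcm hKL (hsub hr)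
  refine add_le_add ?_ ?_
  · exact setIntegral_mono_on ((h'.integrableOn hβ hcm hKL).mono_set hsub)
      ((h.integrableOn hα hcm hKL).mono_set hsub) measurableSet_Ioi hle
  · exact setIntegral_mono_on ((h'.integrableOn_sq hβ hcm hKL).mono_set hsub)
      ((h.integrableOn_sq hα hcm hKL).mono_set hsub) measurableSet_Ioi fun r hr =>
        pow_le_pow_left₀ ((h'.completelyMonotoneFn hβ hcm hKL).nonneg (hsub hr)) (hle r hr) 2

end SolvesResolventEq

theorem Ebeta_integrability_and_uniform_tails_general {K : ℝ → ℝ} (hcm : CompletelyMonotoneFn K)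
    (hsq : ∀ T > 0, IntervalIntegrable (fun t => K t ^ 2) volume 0 T) {E : ℝ → ℝ → ℝ}
    (hE : ∀ β < 0, SolvesResolventEq K β (E β)) :
    (∀ β < 0,
      IntegrableOn (E β) (Ioi 0) ∧
      IntegrableOn (fun t => E β t ^ 2) (Ioi 0) ∧
      CompletelyMonotoneFn (E β) ∧
      ∫ t in Ioi 0, E β t = (((normL1 K)⁻¹ + ENNReal.ofReal |β|)⁻¹).toReal) ∧
    ∀ α < 0, ∀ ε > 0, ∃ t₀, ∀ t ≥ t₀, ∀ β ≤ α,
      (∫ r in Ioi t, E β r) + (∫ r in Ioi t, E β r ^ 2) < ε := by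
  have hKL : IsCausalL2Loc ((Ioi 0).indicator K) :=
    .of_indicator (hcm.continuousOn.aestronglyMeasurable measurableSet_Ioi) hsq
  refine ⟨fun β hβ => ⟨(hE β hβ).integrableOn hβ hcm hKL, (hE β hβ).integrableOn_sq hβ hcm hKL,
    (hE β hβ).completelyMonotoneFn hβ hcm hKL, (hE β hβ).integral_eq hβ hcm hKL⟩,
    fun α hα ε hε => ?_⟩
  have tail_α : Tendsto (fun t => (∫ r in Ioi t, E α r) + ∫ r in Ioi t, E α r ^ 2) atTop (𝓝 0) := by
    simpa using (tendsto_setIntegral_Ioi_atTop_zero ((hE α hα).integrableOn hα hcm hKL)).add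
      (tendsto_setIntegral_Ioi_atTop_zero ((hE α hα).integrableOn_sq hα hcm hKL))
  obtain ⟨t₀, ht₀⟩ := eventually_atTop.1
    ((tail_α.eventually_lt_const hε).and (eventually_ge_atTop 0))
  exact ⟨t₀, fun t ht β hβ => ((hE α hα).setIntegral_Ioi_add_sq_le_of_le
    (hE β (hβ.trans_lt hα)) hα hβ hcm hKL (ht₀ t ht).2).trans_lt (ht₀ t ht).1⟩

/-- Under assumption (VOU), the resolvent-type function `E_β`
belongs to `L¹(ℝ₊) ∩ L²(ℝ₊)`, is completely monotone, satisfies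
`∫₀^∞ E_β = 1/(‖K‖_{L¹}⁻¹ + |β|)` (with `1/∞ = 0`), and its tails vanish
uniformly for `β ≤ -1/N`. -/
theorem Ebeta_integrability_and_uniform_tails
    (K : ℝ → ℝ) (γ b x₀ σ : ℝ) (hσ : 0 < σ)
    (hVOU : AssumptionVOUKernel K γ)
    (E : ℝ → ℝ → ℝ)
    (hE : ∀ β < (0:ℝ), SolvesResolventEq K β (E β)) :
    (∀ β < (0:ℝ),
      IntegrableOn (E β) (Set.Ioi 0) ∧
      IntegrableOn (fun t => (E β t) ^ 2) (Set.Ioi 0) ∧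
      CompletelyMonotoneFn (E β) ∧
      (∫ t in Set.Ioi (0:ℝ), E β t) = (((normL1 K)⁻¹ + ENNReal.ofReal |β|)⁻¹).toReal) ∧
    (∀ N : ℕ, 1 ≤ N → ∀ ε > (0:ℝ), ∃ t₀ : ℝ, ∀ t ≥ t₀, ∀ β ≤ -(1 / (N:ℝ)),
      (∫ r in Set.Ioi t, E β r) + (∫ r in Set.Ioi t, (E β r) ^ 2) < ε) := by
  obtain ⟨hparts, htails⟩ := Ebeta_integrability_and_uniform_tails_general hVOU.2.1 hVOU.2.2.1 hE
  exact ⟨hparts, fun N hN => htails _ (neg_lt_zero.2 (one_div_pos.2 (Nat.cast_pos.2 hN)))⟩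

end
end
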